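/- arXiv:1606.02623 — 3 statements merged into one kernel-verified Lean document; each statement's English description precedes it below -/
import Mathlib

section
/- Let d ≥ 2 and let φ : ℝᵈ → ℝ be a nonnegative, continuously differentiable, strictly convex function; set ψ = |·|² + φ. Let σ be the pushforward of Lebesgue measure on ℝᵈ under y ↦ (y, ψ(y)) and σ₀ the pushforward of Lebesgue measure on ℝᵈ under y ↦ (y, |y|²), both Borel measures on ℝ^{d+1}. Then σ∗σ and σ₀∗σ₀ are absolutely continuous with respect to Lebesgue measure on ℝ^{d+1}, and for Lebesgue-almost every (ξ, τ) ∈ ℝᵈ × (0, ∞) the Radon–Nikodym derivatives satisfy the strict inequality d(σ∗σ)/dLeb (ξ, 2ψ(ξ/2) + τ) < d(σ₀∗σ₀)/dLeb (ξ, |ξ|²/2 + τ). -/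
open MeasureTheory Filter
open scoped ENNReal

noncomputable section

/-!
In the midpoint coordinates `y = ξ / 2 + ω`, `z = ξ / 2 - ω`, the convolution square of the measure
on the graph of `ψ` is, after the shear that subtracts `2 * ψ (ξ / 2)` from the height, the image
of `dξ dω` under `(ξ, ω) ↦ (ξ, ψ (ξ / 2 + ω) + ψ (ξ / 2 - ω) - 2 * ψ (ξ / 2))`. For the paraboloid
this second difference is `2 * ‖ω‖ ^ 2`; for `ψ = ‖·‖ ^ 2 + φ` it is `G r = 2 * r ^ 2 + h r` along
each ray `ω = r • θ`, where `h` is convex with a strict minimum at `h 0 = 0`. Hence `h' > 0` almost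
everywhere, so that `G' r > 4 * r` and `G r > 2 * r ^ 2`: heights leave `0` strictly faster than for
the paraboloid, and since the density of the latter, proportional to `τ ^ ((d - 2) / 2)`, is
nondecreasing for `d ≥ 2`, the image of `r ^ (d - 1) dr` under `G` is strictly smaller than its
image under `r ↦ 2 * r ^ 2`. Strict domination survives integration over `θ` and `ξ` and passes to
densities. As `h` is only differentiable almost everywhere, the change of variables is used as
the inequality `∫ |G'| * (f ∘ G) ≤ ∫ f`, which holds for every injective `G`.
-/

open Metric Set

section StrictDomination

variable {α β γ : Type*} [MeasurableSpace α] [MeasurableSpace β] [MeasurableSpace γ]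

/-- Domination of measures, strict on every measurable set on which that is possible. For σ-finite
measures this says that the density of `ν` with respect to `ν₀` is less than `1` almost
everywhere; the formulation through sets avoids choosing densities measurably in a parameter. -/
structure StrictlyDominated (ν ν₀ : Measure α) : Prop where
  le : ν ≤ ν₀
  measure_lt : ∀ {B : Set α}, MeasurableSet B → ν₀ B ≠ 0 → ν₀ B ≠ ∞ → ν B < ν₀ B

namespace StrictlyDominated

theorem map {ν ν₀ : Measure α} (h : StrictlyDominated ν ν₀) {f : α → β} (hf : Measurable f) :
    StrictlyDominated (ν.map f) (ν₀.map f) where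
  le := Measure.map_mono h.le hf
  measure_lt hB := by
    rw [Measure.map_apply hf hB, Measure.map_apply hf hB]
    exact h.measure_lt (hf hB)

theorem map_prod {κ : Measure α} {ρ : Measure β} [SFinite ρ] {F F₀ : α × β → γ}
    (hF : Measurable F) (hF₀ : Measurable F₀)
    (h : ∀ a, StrictlyDominated (ρ.map fun b => F (a, b)) (ρ.map fun b => F₀ (a, b))) :
    StrictlyDominated ((κ.prod ρ).map F) ((κ.prod ρ).map F₀) := by
  have map_apply_eq_lintegral {G : α × β → γ} (hG : Measurable G) {B : Set γ}
      (hB : MeasurableSet B) :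
      (κ.prod ρ).map G B = ∫⁻ a, ρ.map (fun b => G (a, b)) B ∂κ := by
    rw [Measure.map_apply hG hB, Measure.prod_apply (hG hB)]
    exact lintegral_congr fun a => (Measure.map_apply (hG.comp measurable_prodMk_left) hB).symm
  have measurable_map_apply {B : Set γ} (hB : MeasurableSet B) :
      Measurable fun a => ρ.map (fun b => F₀ (a, b)) B := by
    convert measurable_measure_prodMk_left (ν := ρ) (hF₀ hB) using 2 with a
    exact Measure.map_apply (hF₀.comp measurable_prodMk_left) hB
  refine ⟨Measure.le_iff.2 fun B hB => ?_, fun {B} hB => ?_⟩ <;>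
    rw [map_apply_eq_lintegral hF hB, map_apply_eq_lintegral hF₀ hB]
  · exact lintegral_mono fun a => (h a).le B
  · intro hpos hfin
    have hle (a : α) := (h a).le B
    refine lintegral_strict_mono_of_ae_le_of_ae_lt_on (measurable_map_apply hB).aemeasurable
      (ne_top_of_le_ne_top hfin (lintegral_mono hle)) (ae_of_all _ hle)
      (s := Function.support fun a => ρ.map (fun b => F₀ (a, b)) B) ?_ ?_
    · exact ((lintegral_pos_iff_support (measurable_map_apply hB)).1 hpos.bot_lt).ne'
    · filter_upwards [ae_lt_top (measurable_map_apply hB) hfin] with a ha hsupp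
      exact (h a).measure_lt hB hsupp ha.ne

theorem rnDeriv_lt {ν ν₀ : Measure α} (h : StrictlyDominated ν ν₀) {μ : Measure α}
    [SigmaFinite μ] [SigmaFinite ν₀] (hν₀ : ν₀ ≪ μ) :
    ∀ᵐ a ∂ν₀, ν.rnDeriv μ a < ν₀.rnDeriv μ a := by
  have hmeas : MeasurableSet {a | ν₀.rnDeriv μ a ≤ ν.rnDeriv μ a} :=
    measurableSet_le (Measure.measurable_rnDeriv _ _) (Measure.measurable_rnDeriv _ _)
  by_contra hae
  have hpos : 0 < ν₀ {a | ν₀.rnDeriv μ a ≤ ν.rnDeriv μ a} := by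
    simpa only [ae_iff, not_lt, ← pos_iff_ne_zero] using hae
  obtain ⟨B, hB, hBsub, hBpos, hBfin⟩ := ν₀.exists_subset_measure_lt_top hmeas hpos
  refine (h.measure_lt hB hBpos.ne' hBfin.ne).not_ge ?_
  calc ν₀ B = ∫⁻ a in B, ν₀.rnDeriv μ a ∂μ := (Measure.setLIntegral_rnDeriv hν₀ B).symm
    _ ≤ ∫⁻ a in B, ν.rnDeriv μ a ∂μ := setLIntegral_mono' hB fun a ha => hBsub ha
    _ ≤ ν B := Measure.setLIntegral_rnDeriv_le B

end StrictlyDominated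

end StrictDomination

section RealLine

theorem setLIntegral_abs_deriv_mul_comp_le {G : ℝ → ℝ} {s : Set ℝ} (hs : MeasurableSet s)
    (hG : InjOn G s) (f : ℝ → ℝ≥0∞) :
    ∫⁻ r in s, ENNReal.ofReal |deriv G r| * f (G r) ≤ ∫⁻ τ in G '' s, f τ := by
  let D := {r | DifferentiableAt ℝ G r}
  have hD : MeasurableSet D := measurableSet_of_differentiableAt ℝ G
  -- `deriv G` takes the value `0` where `G` is not differentiable.
  have hzero : ∀ r ∈ s \ D, ENNReal.ofReal |deriv G r| * f (G r) = 0 := fun r hr => by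
    simp [deriv_zero_of_not_differentiableAt hr.2]
  calc ∫⁻ r in s, ENNReal.ofReal |deriv G r| * f (G r)
      = ∫⁻ r in s ∩ D, ENNReal.ofReal |deriv G r| * f (G r) := by
        rw [← lintegral_inter_add_sdiff _ s hD,
          setLIntegral_congr_fun (hs.diff hD) hzero, lintegral_zero, add_zero]
    _ = ∫⁻ τ in G '' (s ∩ D), f τ :=
        (lintegral_image_eq_lintegral_abs_deriv_mul (hs.inter hD)
          (fun r hr => hr.2.hasDerivAt.hasDerivWithinAt) (hG.mono inter_subset_left) f).symm
    _ ≤ ∫⁻ τ in G '' s, f τ := lintegral_mono_set (image_mono inter_subset_left)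

theorem strictlyDominated_map_withDensity {G : ℝ → ℝ} {s t : Set ℝ} (hs : MeasurableSet s)
    (hG : Measurable G) (hinj : InjOn G s) (hst : MapsTo G s t)
    {u w : ℝ → ℝ≥0∞} (hw : Measurable w)
    (huw : ∀ᵐ r, r ∈ s → u r < ENNReal.ofReal |deriv G r| * w (G r)) :
    StrictlyDominated (((volume.restrict s).withDensity u).map G)
      ((volume.restrict t).withDensity w) := by
  have map_apply {B : Set ℝ} (hB : MeasurableSet B) :
      ((volume.restrict s).withDensity u).map G B = ∫⁻ r in G ⁻¹' B ∩ s, u r := by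
    rw [Measure.map_apply hG hB, withDensity_apply _ (hG hB), Measure.restrict_restrict (hG hB)]
  have lintegral_le {B : Set ℝ} (hB : MeasurableSet B) :
      ∫⁻ r in G ⁻¹' B ∩ s, ENNReal.ofReal |deriv G r| * w (G r) ≤
        (volume.restrict t).withDensity w B := by
    rw [withDensity_apply _ hB, Measure.restrict_restrict hB]
    exact (setLIntegral_abs_deriv_mul_comp_le ((hG hB).inter hs)
      (hinj.mono inter_subset_right) w).trans
      (lintegral_mono_set (image_subset_iff.2 fun r hr => ⟨hr.1, hst hr.2⟩))
  have huwB (B : Set ℝ) : ∀ᵐ r, r ∈ G ⁻¹' B ∩ s → u r < ENNReal.ofReal |deriv G r| * w (G r) :=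
    huw.mono fun r h hr => h hr.2
  have le {B : Set ℝ} (hB : MeasurableSet B) :
      ∫⁻ r in G ⁻¹' B ∩ s, u r ≤
        ∫⁻ r in G ⁻¹' B ∩ s, ENNReal.ofReal |deriv G r| * w (G r) :=
    setLIntegral_mono_ae' ((hG hB).inter hs) ((huwB B).mono fun r h hr => (h hr).le)
  refine ⟨Measure.le_iff.2 fun B hB => ?_, fun {B} hB hpos hfin => ?_⟩ <;> rw [map_apply hB]
  · exact (le hB).trans (lintegral_le hB)
  · rcases eq_or_ne (volume (G ⁻¹' B ∩ s)) 0 with hnull | hnull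
    · rw [setLIntegral_measure_zero _ _ hnull]
      exact hpos.bot_lt
    · refine lt_of_lt_of_le (setLIntegral_strict_mono ((hG hB).inter hs) hnull ?_ ?_ (huwB B))
        (lintegral_le hB)
      · exact (measurable_deriv G).abs.ennreal_ofReal.mul (hw.comp hG)
      · exact ne_top_of_le_ne_top hfin ((le hB).trans (lintegral_le hB))

theorem map_withDensity_eq_of_hasDerivAt {G G' : ℝ → ℝ} {s : Set ℝ} (hs : MeasurableSet s)
    (hG : Measurable G) (hinj : InjOn G s) (hderiv : ∀ r ∈ s, HasDerivAt G (G' r) r)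
    {u w : ℝ → ℝ≥0∞} (huw : ∀ r ∈ s, u r = ENNReal.ofReal |G' r| * w (G r)) :
    ((volume.restrict s).withDensity u).map G = (volume.restrict (G '' s)).withDensity w := by
  ext B hB
  rw [Measure.map_apply hG hB, withDensity_apply _ (hG hB), withDensity_apply _ hB,
    Measure.restrict_restrict (hG hB), Measure.restrict_restrict hB, inter_comm B,
    ← image_inter_preimage, inter_comm s, lintegral_image_eq_lintegral_abs_deriv_mul
      ((hG hB).inter hs) (fun r hr => (hderiv r hr.2).hasDerivWithinAt)
      (hinj.mono inter_subset_right)]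
  exact setLIntegral_congr_fun ((hG hB).inter hs) fun r hr => huw r hr.2

theorem strictMonoOn_Ici_of_convexOn {h : ℝ → ℝ} (hconv : ConvexOn ℝ (Ici 0) h)
    (hmin : ∀ r, 0 < r → h 0 < h r) : StrictMonoOn h (Ici 0) := by
  intro s hs r hr hsr
  rcases eq_or_lt_of_le (mem_Ici.1 hs) with rfl | hs_pos
  · exact hmin r hsr
  · exact hconv.strictMonoOn self_mem_Ici hs_pos (hmin s hs_pos) ⟨hs, self_mem_Ici⟩
      ⟨hr, hsr.le⟩ hsr

theorem ae_differentiableAt_and_deriv_pos_of_convexOn {h : ℝ → ℝ}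
    (hconv : ConvexOn ℝ (Ici 0) h) (hmin : ∀ r, 0 < r → h 0 < h r) :
    ∀ᵐ r, r ∈ Ioi 0 → DifferentiableAt ℝ h r ∧ 0 < deriv h r := by
  have hmono := ((strictMonoOn_Ici_of_convexOn hconv hmin).mono Ioi_subset_Ici_self).monotoneOn
  filter_upwards [(ae_restrict_iff' measurableSet_Ioi).1
    (hmono.ae_differentiableWithinAt measurableSet_Ioi)] with r hdiff hr
  have hdiff : DifferentiableAt ℝ h r := (hdiff hr).differentiableAt (Ioi_mem_nhds hr)
  refine ⟨hdiff, lt_of_lt_of_le ?_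
    (hconv.slope_le_deriv self_mem_Ici (Ioi_subset_Ici_self hr) hr hdiff)⟩
  rw [slope_def_field]
  exact div_pos (sub_pos.2 (hmin r hr)) (sub_pos.2 hr)

/-- The measure `r ^ n dr` on the half-line `(0, ∞)`, the radial factor of Lebesgue measure on a
space of dimension `n + 1` in polar coordinates. Unlike `Measure.volumeIoiPow` it lives on `ℝ`
rather than on a subtype. -/
def rayMeasure (n : ℕ) : Measure ℝ :=
  (volume.restrict (Ioi 0)).withDensity fun r => ENNReal.ofReal (r ^ n)

instance (n : ℕ) : SFinite (rayMeasure n) := by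
  unfold rayMeasure
  infer_instance

/-- The density at height `τ > 0` of the image of `rayMeasure (n + 1)` under `r ↦ 2 * r ^ 2`. -/
def heightDensity (n : ℕ) (τ : ℝ) : ℝ≥0∞ :=
  ENNReal.ofReal (√(τ / 2) ^ n / 4)

theorem measurable_heightDensity (n : ℕ) : Measurable (heightDensity n) := by
  unfold heightDensity
  fun_prop

theorem hasDerivAt_two_mul_sq (r : ℝ) : HasDerivAt (fun r : ℝ => 2 * r ^ 2) (4 * r) r := by
  refine ((hasDerivAt_pow 2 r).const_mul 2).congr_deriv ?_
  ring

theorem strictMonoOn_two_mul_sq : StrictMonoOn (fun r : ℝ => 2 * r ^ 2) (Ici 0) :=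
  fun r hr s _ hrs => by
    have := pow_lt_pow_left₀ hrs hr two_ne_zero
    simpa

theorem image_two_mul_sq_Ioi : (fun r : ℝ => 2 * r ^ 2) '' Ioi 0 = Ioi 0 := by
  ext τ
  refine ⟨?_, fun hτ => ⟨√(τ / 2), Real.sqrt_pos.2 (half_pos hτ), ?_⟩⟩
  · rintro ⟨r, hr, rfl⟩
    have : 0 < r := hr
    exact mem_Ioi.2 (by positivity)
  · simp only [Real.sq_sqrt (half_pos hτ).le, mul_div_cancel₀ τ two_ne_zero]

theorem map_two_mul_sq_rayMeasure (n : ℕ) :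
    (rayMeasure (n + 1)).map (fun r => 2 * r ^ 2) =
      (volume.restrict (Ioi 0)).withDensity (heightDensity n) := by
  have huw : ∀ r ∈ Ioi (0 : ℝ),
      ENNReal.ofReal (r ^ (n + 1)) = ENNReal.ofReal |4 * r| * heightDensity n (2 * r ^ 2) := by
    intro r (hr : 0 < r)
    rw [heightDensity, ← ENNReal.ofReal_mul (abs_nonneg _), mul_div_cancel_left₀ _ two_ne_zero,
      Real.sqrt_sq hr.le, abs_of_pos (by positivity)]
    ring_nf
  rw [rayMeasure, map_withDensity_eq_of_hasDerivAt measurableSet_Ioi (by fun_prop)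
    (strictMonoOn_two_mul_sq.injOn.mono Ioi_subset_Ici_self) (fun r _ => hasDerivAt_two_mul_sq r)
    huw, image_two_mul_sq_Ioi]

theorem strictlyDominated_map_rayMeasure {h : ℝ → ℝ} (hmeas : Measurable h)
    (hconv : ConvexOn ℝ (Ici 0) h) (h0 : 0 ≤ h 0) (hmin : ∀ r, 0 < r → h 0 < h r) (n : ℕ) :
    StrictlyDominated ((rayMeasure (n + 1)).map fun r => 2 * r ^ 2 + h r)
      ((rayMeasure (n + 1)).map fun r => 2 * r ^ 2) := by
  have hmono := strictMonoOn_two_mul_sq.add (strictMonoOn_Ici_of_convexOn hconv hmin)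
  have hhpos (r : ℝ) (hr : 0 < r) : 0 < h r := h0.trans_lt (hmin r hr)
  rw [map_two_mul_sq_rayMeasure]
  refine strictlyDominated_map_withDensity measurableSet_Ioi (by fun_prop)
    (hmono.injOn.mono Ioi_subset_Ici_self) (fun r (hr : 0 < r) => ?_)
    (measurable_heightDensity n) ?_
  · have := hhpos r hr
    exact mem_Ioi.2 (by positivity)
  · filter_upwards [ae_differentiableAt_and_deriv_pos_of_convexOn hconv hmin] with r hderiv hr
    obtain ⟨hdiff, hderivpos⟩ := hderiv hr
    have hr : 0 < r := hr
    have hr_le : r ≤ √((2 * r ^ 2 + h r) / 2) :=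
      Real.le_sqrt_of_sq_le (by linarith [hhpos r hr])
    have hsqrt_pos : 0 < √((2 * r ^ 2 + h r) / 2) := hr.trans_le hr_le
    have hderiv_eq : deriv (fun r => 2 * r ^ 2 + h r) r = 4 * r + deriv h r :=
      ((hasDerivAt_two_mul_sq r).add hdiff.hasDerivAt).deriv
    rw [hderiv_eq, heightDensity, abs_of_pos (by positivity),
      ← ENNReal.ofReal_mul (by positivity), ENNReal.ofReal_lt_ofReal_iff (by positivity)]
    calc r ^ (n + 1) = 4 * r * (r ^ n / 4) := by ring
      _ < (4 * r + deriv h r) * (r ^ n / 4) := by gcongr; linarith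
      _ ≤ (4 * r + deriv h r) * (√((2 * r ^ 2 + h r) / 2) ^ n / 4) := by gcongr

end RealLine

section SecondDifference

variable {E : Type*} [AddCommGroup E]

/-- The symmetric second difference of `ψ` at `x` with increment `ω`. -/
def secondDiff (ψ : E → ℝ) (x ω : E) : ℝ :=
  ψ (x + ω) + ψ (x - ω) - 2 * ψ x

theorem secondDiff_zero_right (ψ : E → ℝ) (x : E) : secondDiff ψ x 0 = 0 := by
  simp only [secondDiff, add_zero, sub_zero]
  ring

theorem secondDiff_add_left (ψ φ : E → ℝ) (x ω : E) :
    secondDiff (fun y => ψ y + φ y) x ω = secondDiff ψ x ω + secondDiff φ x ω := by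
  simp only [secondDiff]
  ring

theorem secondDiff_pos_of_strictConvexOn [Module ℝ E] {φ : E → ℝ}
    (hφ : StrictConvexOn ℝ univ φ) (x : E) {ω : E} (hω : ω ≠ 0) : 0 < secondDiff φ x ω := by
  have hne : x + ω ≠ x - ω := fun h => hω <| by
    have : ω = (2 : ℝ)⁻¹ • ((x + ω) - (x - ω)) := by module
    rw [this, h, sub_self, smul_zero]
  have hmid : (2 : ℝ)⁻¹ • (x + ω) + (2 : ℝ)⁻¹ • (x - ω) = x := by module
  have hlt := hφ.2 (mem_univ _) (mem_univ _) hne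
    (show (0 : ℝ) < 2⁻¹ by norm_num) (show (0 : ℝ) < 2⁻¹ by norm_num) (by norm_num)
  rw [hmid, smul_eq_mul, smul_eq_mul] at hlt
  unfold secondDiff
  linarith

theorem convexOn_secondDiff [Module ℝ E] {φ : E → ℝ} (hφ : ConvexOn ℝ univ φ) (x : E) :
    ConvexOn ℝ univ (secondDiff φ x) := by
  have hadd : ConvexOn ℝ univ fun ω => φ (x + ω) :=
    hφ.comp_affineMap (AffineMap.const ℝ E x + AffineMap.id ℝ E)
  have hsub : ConvexOn ℝ univ fun ω => φ (x - ω) :=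
    hφ.comp_affineMap (AffineMap.const ℝ E x - AffineMap.id ℝ E)
  exact (hadd.add hsub).add_const (-(2 * φ x))

theorem secondDiff_norm_sq {F : Type*} [NormedAddCommGroup F] [InnerProductSpace ℝ F] (x ω : F) :
    secondDiff (fun y => ‖y‖ ^ 2) x ω = 2 * ‖ω‖ ^ 2 := by
  have := parallelogram_law_with_norm ℝ x ω
  simp only [secondDiff]
  linarith

end SecondDifference

section HeightMeasure

open Module

theorem map_coe_volumeIoiPow (n : ℕ) :
    (Measure.volumeIoiPow n).map ((↑) : Ioi (0 : ℝ) → ℝ) = rayMeasure n := by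
  ext B hB
  rw [Measure.map_apply measurable_subtype_coe hB, Measure.volumeIoiPow, rayMeasure,
    withDensity_apply _ (measurable_subtype_coe hB), withDensity_apply _ hB,
    setLIntegral_subtype measurableSet_Ioi _ fun r : ℝ => ENNReal.ofReal (r ^ n),
    Subtype.image_preimage_coe, Measure.restrict_restrict hB, inter_comm]

variable {E : Type*} [NormedAddCommGroup E] [NormedSpace ℝ E] [FiniteDimensional ℝ E]
  [MeasurableSpace E] [BorelSpace E] (μ : Measure E) [μ.IsAddHaarMeasure]

theorem measurePreserving_smul_toSphere_prod_rayMeasure [Nontrivial E] :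
    MeasurePreserving (fun p : sphere (0 : E) 1 × ℝ => p.2 • (p.1 : E))
      (μ.toSphere.prod (rayMeasure (finrank ℝ E - 1))) μ := by
  refine ⟨by fun_prop, ?_⟩
  have hpolar := μ.measurePreserving_homeomorphUnitSphereProd.symm
    (homeomorphUnitSphereProd E).toMeasurableEquiv
  have hval : (μ.comap ((↑) : ({0}ᶜ : Set E) → E)).map (↑) = μ := by
    rw [map_comap_subtype_coe (measurableSet_singleton 0).compl, restrict_compl_singleton]
  have hray : μ.toSphere.prod (rayMeasure (finrank ℝ E - 1)) =
      (μ.toSphere.prod (Measure.volumeIoiPow (finrank ℝ E - 1))).map (Prod.map id (↑)) := by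
    rw [← Measure.map_prod_map _ _ measurable_id measurable_subtype_coe, Measure.map_id,
      map_coe_volumeIoiPow]
  rw [hray, Measure.map_map (by fun_prop) (by fun_prop)]
  conv_rhs => rw [← hval, ← hpolar.map_eq, Measure.map_map measurable_subtype_coe hpolar.measurable]
  rfl

theorem map_two_mul_norm_sq (hdim : 2 ≤ finrank ℝ E) :
    μ.map (fun ω => 2 * ‖ω‖ ^ 2) =
      (volume.restrict (Ioi 0)).withDensity
        (μ.toSphere univ • heightDensity (finrank ℝ E - 2)) := by
  have : Nontrivial E := nontrivial_of_finrank_pos (R := ℝ) (by lia)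
  conv_lhs => rw [← (measurePreserving_smul_toSphere_prod_rayMeasure μ).map_eq]
  rw [Measure.map_map (by fun_prop) (by fun_prop)]
  have hcomp : (fun ω : E => 2 * ‖ω‖ ^ 2) ∘ (fun p : sphere (0 : E) 1 × ℝ => p.2 • (p.1 : E)) =
      (fun r => 2 * r ^ 2) ∘ Prod.snd := by
    ext p
    simp [norm_smul]
  rw [hcomp, ← Measure.map_map (by fun_prop) measurable_snd, Measure.map_snd_prod,
    Measure.map_smul, show finrank ℝ E - 1 = finrank ℝ E - 2 + 1 by lia,
    map_two_mul_sq_rayMeasure, withDensity_smul _ (measurable_heightDensity _)]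

theorem map_two_mul_norm_sq_absolutelyContinuous (hdim : 2 ≤ finrank ℝ E) :
    μ.map (fun ω => 2 * ‖ω‖ ^ 2) ≪ volume := by
  rw [map_two_mul_norm_sq μ hdim]
  exact (withDensity_absolutelyContinuous _ _).trans Measure.restrict_le_self.absolutelyContinuous

theorem restrict_Ioi_absolutelyContinuous_map_two_mul_norm_sq (hdim : 2 ≤ finrank ℝ E) :
    volume.restrict (Ioi 0) ≪ μ.map (fun ω => 2 * ‖ω‖ ^ 2) := by
  have : Nontrivial E := nontrivial_of_finrank_pos (R := ℝ) (by lia)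
  rw [map_two_mul_norm_sq μ hdim]
  refine withDensity_absolutelyContinuous'
    ((measurable_heightDensity _).const_smul _).aemeasurable ?_
  filter_upwards [ae_restrict_mem measurableSet_Ioi] with τ hτ
  have hτ : 0 < τ / 2 := half_pos hτ
  exact mul_ne_zero (Measure.measure_univ_ne_zero.2 μ.toSphere_ne_zero)
    (ENNReal.ofReal_pos.2 (by positivity)).ne'

theorem sigmaFinite_map_two_mul_norm_sq (hdim : 2 ≤ finrank ℝ E) :
    SigmaFinite (μ.map fun ω => 2 * ‖ω‖ ^ 2) := by
  rw [map_two_mul_norm_sq μ hdim]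
  exact SigmaFinite.withDensity_of_ne_top' fun τ =>
    ENNReal.mul_ne_top (measure_ne_top _ _) ENNReal.ofReal_ne_top

end HeightMeasure

section VerticalShear

variable {α : Type*} [MeasurableSpace α]

/-- The shear `(x, τ) ↦ (x, g x + τ)`. -/
def verticalShear (g : α → ℝ) (hg : Measurable g) : α × ℝ ≃ᵐ α × ℝ where
  toFun p := (p.1, g p.1 + p.2)
  invFun p := (p.1, p.2 - g p.1)
  left_inv p := by simp
  right_inv p := by simp
  measurable_toFun := by simp only [Equiv.coe_fn_mk]; fun_prop
  measurable_invFun := by simp only [Equiv.symm_mk, Equiv.coe_fn_mk]; fun_prop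

theorem measurePreserving_verticalShear (μ : Measure α) [SFinite μ] {g : α → ℝ}
    (hg : Measurable g) :
    MeasurePreserving (verticalShear g hg) (μ.prod volume) (μ.prod volume) :=
  (MeasurePreserving.id μ).skew_product (g := fun x τ => g x + τ) (by fun_prop)
    (ae_of_all _ fun x => map_add_left_eq_self volume (g x))

end VerticalShear

section Convolution

open Measure

/-- The pushforward of `μ` to the graph of `ψ`. -/
def graphMeasure {α : Type*} [MeasurableSpace α] (μ : Measure α) (ψ : α → ℝ) : Measure (α × ℝ) :=
  μ.map fun y => (y, ψ y)

variable {E : Type*} [AddCommGroup E] [Module ℝ E] [MeasurableSpace E] (μ : Measure E)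

/-- The image of `μ × μ` under `(ξ, ω) ↦ (ξ, secondDiff ψ (ξ / 2) ω)`: the convolution square of
`graphMeasure μ ψ` with heights measured from the boundary `τ = 2 * ψ (ξ / 2)`. -/
def secondDiffMeasure (ψ : E → ℝ) : Measure (E × ℝ) :=
  (μ.prod μ).map fun p => (p.1, secondDiff ψ ((2 : ℝ)⁻¹ • p.1) p.2)

variable [MeasurableAdd₂ E] [MeasurableNeg E] [MeasurableConstSMul ℝ E]
  [μ.IsAddLeftInvariant]

theorem measurePreserving_midpoint_coordinates [SFinite μ] :
    MeasurePreserving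
      (fun p : E × E => ((2 : ℝ)⁻¹ • p.1 + p.2, (2 : ℝ)⁻¹ • p.1 - p.2))
      (μ.prod μ) (μ.prod μ) := by
  have hshear : MeasurePreserving (fun p : E × E => (p.1, (2 : ℝ)⁻¹ • p.1 + p.2))
      (μ.prod μ) (μ.prod μ) :=
    (MeasurePreserving.id μ).skew_product (g := fun ξ ω => (2 : ℝ)⁻¹ • ξ + ω) (by fun_prop)
      (ae_of_all _ fun ξ => map_add_left_eq_self μ _)
  convert (measurePreserving_prod_sub_swap μ μ).comp hshear using 2 with p
  simp only [Function.comp_apply, Prod.mk.injEq, true_and]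
  module

theorem conv_graphMeasure_self [SFinite μ] {ψ : E → ℝ} (hψ : Measurable ψ) :
    graphMeasure μ ψ ∗ graphMeasure μ ψ =
      (secondDiffMeasure μ ψ).map
        (verticalShear (fun ξ => 2 * ψ ((2 : ℝ)⁻¹ • ξ)) (by fun_prop)) := by
  have hgraph : Measurable fun y => (y, ψ y) := by fun_prop
  have hdiff : Measurable fun p : E × E => (p.1, secondDiff ψ ((2 : ℝ)⁻¹ • p.1) p.2) := by
    unfold secondDiff
    fun_prop
  have hadd : Measurable fun p : (E × ℝ) × E × ℝ => p.1 + p.2 := by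
    change Measurable fun p : (E × ℝ) × E × ℝ => (p.1.1 + p.2.1, p.1.2 + p.2.2)
    fun_prop
  rw [conv, graphMeasure, map_prod_map _ _ hgraph hgraph,
    ← (measurePreserving_midpoint_coordinates μ).map_eq, map_map hadd (by fun_prop),
    map_map (by fun_prop) (by fun_prop), secondDiffMeasure,
    map_map (MeasurableEquiv.measurable _) hdiff]
  congr 1
  ext1 p
  refine Prod.ext ?_ ?_
  · change (2 : ℝ)⁻¹ • p.1 + p.2 + ((2 : ℝ)⁻¹ • p.1 - p.2) = p.1
    module
  · simp [verticalShear, secondDiff]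

theorem conv_graphMeasure_self_absolutelyContinuous [SFinite μ] {ψ : E → ℝ}
    (hψ : Measurable ψ) (hac : secondDiffMeasure μ ψ ≪ μ.prod volume) :
    graphMeasure μ ψ ∗ graphMeasure μ ψ ≪ μ.prod volume := by
  rw [conv_graphMeasure_self μ hψ, ← (measurePreserving_verticalShear μ _).map_eq]
  exact hac.map (MeasurableEquiv.measurable _)

theorem rnDeriv_conv_graphMeasure_self [SigmaFinite μ] {ψ : E → ℝ} (hψ : Measurable ψ)
    [SigmaFinite (secondDiffMeasure μ ψ)] :
    (fun p => (graphMeasure μ ψ ∗ graphMeasure μ ψ).rnDeriv (μ.prod volume)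
        (p.1, 2 * ψ ((2 : ℝ)⁻¹ • p.1) + p.2)) =ᵐ[μ.prod volume]
      (secondDiffMeasure μ ψ).rnDeriv (μ.prod volume) := by
  have hg : Measurable fun ξ => 2 * ψ ((2 : ℝ)⁻¹ • ξ) := by fun_prop
  have := (verticalShear _ hg).measurableEmbedding.rnDeriv_map (secondDiffMeasure μ ψ)
    (μ.prod volume)
  rwa [(measurePreserving_verticalShear μ hg).map_eq, ← conv_graphMeasure_self μ hψ] at this

end Convolution

section Comparison

open Module
open scoped Measure

variable {E : Type*} [NormedAddCommGroup E] [InnerProductSpace ℝ E] [FiniteDimensional ℝ E]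
  [MeasurableSpace E] [BorelSpace E] (μ : Measure E) [μ.IsAddHaarMeasure]

theorem strictlyDominated_map_secondDiff (hdim : 2 ≤ finrank ℝ E) {φ : E → ℝ}
    (hφ : StrictConvexOn ℝ univ φ) (x : E) :
    StrictlyDominated (μ.map (secondDiff (fun y => ‖y‖ ^ 2 + φ y) x))
      (μ.map fun ω => 2 * ‖ω‖ ^ 2) := by
  have : Nontrivial E := nontrivial_of_finrank_pos (R := ℝ) (by lia)
  have hconv := convexOn_secondDiff hφ.convexOn x
  have hcont : Continuous (secondDiff φ x) := continuousOn_univ.1 (hconv.continuousOn isOpen_univ)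
  have hsplit : secondDiff (fun y => ‖y‖ ^ 2 + φ y) x =
      fun ω => 2 * ‖ω‖ ^ 2 + secondDiff φ x ω := by
    ext ω
    rw [secondDiff_add_left, secondDiff_norm_sq]
  rw [hsplit, ← (measurePreserving_smul_toSphere_prod_rayMeasure μ).map_eq,
    Measure.map_map (by fun_prop) (by fun_prop), Measure.map_map (by fun_prop) (by fun_prop),
    show finrank ℝ E - 1 = finrank ℝ E - 2 + 1 by lia]
  refine StrictlyDominated.map_prod (by fun_prop) (by fun_prop) fun θ => ?_
  have hray : ConvexOn ℝ (Ici 0) fun r : ℝ => secondDiff φ x (r • (θ : E)) :=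
    (hconv.comp_linearMap (LinearMap.toSpanSingleton ℝ E θ)).subset (subset_univ _) (convex_Ici 0)
  have hzero : secondDiff φ x ((0 : ℝ) • (θ : E)) = 0 := by
    rw [zero_smul, secondDiff_zero_right]
  have hpos (r : ℝ) (hr : 0 < r) :
      secondDiff φ x ((0 : ℝ) • (θ : E)) < secondDiff φ x (r • (θ : E)) :=
    hzero.trans_lt <| secondDiff_pos_of_strictConvexOn hφ x <|
      smul_ne_zero hr.ne' (ne_zero_of_mem_unit_sphere θ)
  simpa [norm_smul] using
    strictlyDominated_map_rayMeasure (by fun_prop) hray hzero.ge hpos (finrank ℝ E - 2)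

theorem secondDiffMeasure_norm_sq :
    secondDiffMeasure μ (fun y => ‖y‖ ^ 2) = μ.prod (μ.map fun ω => 2 * ‖ω‖ ^ 2) := by
  have hprod := Measure.map_prod_map μ μ measurable_id
    (show Measurable fun ω : E => 2 * ‖ω‖ ^ 2 by fun_prop)
  rw [Measure.map_id] at hprod
  simp only [secondDiffMeasure, secondDiff_norm_sq, hprod]
  rfl

theorem secondDiffMeasure_norm_sq_absolutelyContinuous (hdim : 2 ≤ finrank ℝ E) :
    secondDiffMeasure μ (fun y => ‖y‖ ^ 2) ≪ μ.prod volume := by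
  rw [secondDiffMeasure_norm_sq]
  exact .prod .rfl (map_two_mul_norm_sq_absolutelyContinuous μ hdim)

theorem sigmaFinite_secondDiffMeasure_norm_sq (hdim : 2 ≤ finrank ℝ E) :
    SigmaFinite (secondDiffMeasure μ fun y => ‖y‖ ^ 2) := by
  have := sigmaFinite_map_two_mul_norm_sq μ hdim
  rw [secondDiffMeasure_norm_sq]
  infer_instance

theorem restrict_pos_absolutelyContinuous_secondDiffMeasure_norm_sq (hdim : 2 ≤ finrank ℝ E) :
    (μ.prod volume).restrict {p | 0 < p.2} ≪ secondDiffMeasure μ (fun y => ‖y‖ ^ 2) := by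
  have hset : {p : E × ℝ | 0 < p.2} = univ ×ˢ Ioi 0 := by
    ext
    simp
  rw [hset, ← Measure.prod_restrict, Measure.restrict_univ, secondDiffMeasure_norm_sq]
  exact .prod .rfl (restrict_Ioi_absolutelyContinuous_map_two_mul_norm_sq μ hdim)

theorem strictlyDominated_secondDiffMeasure (hdim : 2 ≤ finrank ℝ E) {φ : E → ℝ}
    (hφ : StrictConvexOn ℝ univ φ) :
    StrictlyDominated (secondDiffMeasure μ fun y => ‖y‖ ^ 2 + φ y)
      (secondDiffMeasure μ fun y => ‖y‖ ^ 2) := by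
  have hφcont : Continuous φ := continuousOn_univ.1 (hφ.convexOn.continuousOn isOpen_univ)
  refine StrictlyDominated.map_prod (by unfold secondDiff; fun_prop)
    (by unfold secondDiff; fun_prop) fun ξ => ?_
  have hfibre := (strictlyDominated_map_secondDiff μ hdim hφ ((2 : ℝ)⁻¹ • ξ)).map
    (measurable_prodMk_left (x := ξ))
  rw [Measure.map_map measurable_prodMk_left (by unfold secondDiff; fun_prop),
    Measure.map_map measurable_prodMk_left (by fun_prop)] at hfibre
  simp only [secondDiff_norm_sq]
  exact hfibre

theorem statement3_general (hdim : 2 ≤ finrank ℝ E) {φ : E → ℝ} (hφ : StrictConvexOn ℝ univ φ)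
    {ψ : E → ℝ} (hψ : ψ = fun y => ‖y‖ ^ 2 + φ y) :
    graphMeasure μ ψ ∗ graphMeasure μ ψ ≪ μ.prod volume ∧
    graphMeasure μ (‖·‖ ^ 2) ∗ graphMeasure μ (‖·‖ ^ 2) ≪ μ.prod volume ∧
    ∀ᵐ p ∂μ.prod volume, 0 < p.2 →
      (graphMeasure μ ψ ∗ graphMeasure μ ψ).rnDeriv (μ.prod volume)
          (p.1, 2 * ψ ((2 : ℝ)⁻¹ • p.1) + p.2) <
        (graphMeasure μ (‖·‖ ^ 2) ∗ graphMeasure μ (‖·‖ ^ 2)).rnDeriv (μ.prod volume)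
          (p.1, ‖p.1‖ ^ 2 / 2 + p.2) := by
  have hφcont : Continuous φ := continuousOn_univ.1 (hφ.convexOn.continuousOn isOpen_univ)
  have hψmeas : Measurable ψ := by rw [hψ]; fun_prop
  have hnorm : Measurable fun y : E => ‖y‖ ^ 2 := by fun_prop
  have hdom := hψ ▸ strictlyDominated_secondDiffMeasure μ hdim hφ
  have hac₀ := secondDiffMeasure_norm_sq_absolutelyContinuous μ hdim
  have hsf₀ := sigmaFinite_secondDiffMeasure_norm_sq μ hdim
  have hsf := Measure.sigmaFinite_of_le _ hdom.le
  refine ⟨conv_graphMeasure_self_absolutelyContinuous μ hψmeas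
      (hdom.le.absolutelyContinuous.trans hac₀),
    conv_graphMeasure_self_absolutelyContinuous μ hnorm hac₀, ?_⟩
  have hlt := (ae_restrict_iff' (measurableSet_lt measurable_const measurable_snd)).1
    ((restrict_pos_absolutelyContinuous_secondDiffMeasure_norm_sq μ hdim).ae_le
      (hdom.rnDeriv_lt hac₀))
  filter_upwards [hlt, rnDeriv_conv_graphMeasure_self μ hψmeas,
    rnDeriv_conv_graphMeasure_self μ hnorm] with p hlt hψp hnormp hp
  have hheight : ‖p.1‖ ^ 2 / 2 = 2 * ‖(2 : ℝ)⁻¹ • p.1‖ ^ 2 := by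
    rw [norm_smul, mul_pow, norm_inv, Real.norm_two]
    ring
  rw [hψp, hheight, hnormp]
  exact hlt hp

end Comparison

theorem statement3 (d : ℕ) (hd : 2 ≤ d)
    (φ : EuclideanSpace ℝ (Fin d) → ℝ) (hφ0 : ∀ y, 0 ≤ φ y)
    (hφC1 : ContDiff ℝ 1 φ) (hφconv : StrictConvexOn ℝ Set.univ φ)
    (ψ : EuclideanSpace ℝ (Fin d) → ℝ) (hψ : ψ = fun y => ‖y‖ ^ 2 + φ y)
    (σ σ₀ : Measure (EuclideanSpace ℝ (Fin d) × ℝ))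
    (hσ : σ = Measure.map (fun y => (y, ψ y)) volume)
    (hσ₀ : σ₀ = Measure.map (fun y : EuclideanSpace ℝ (Fin d) => (y, ‖y‖ ^ 2)) volume) :
    Measure.map (fun p : (EuclideanSpace ℝ (Fin d) × ℝ) × (EuclideanSpace ℝ (Fin d) × ℝ) =>
        p.1 + p.2) (σ.prod σ) ≪ volume ∧
    Measure.map (fun p : (EuclideanSpace ℝ (Fin d) × ℝ) × (EuclideanSpace ℝ (Fin d) × ℝ) =>
        p.1 + p.2) (σ₀.prod σ₀) ≪ volume ∧
    ∀ᵐ p : EuclideanSpace ℝ (Fin d) × ℝ ∂volume, 0 < p.2 →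
      (Measure.map (fun p : (EuclideanSpace ℝ (Fin d) × ℝ) × (EuclideanSpace ℝ (Fin d) × ℝ) =>
          p.1 + p.2) (σ.prod σ)).rnDeriv volume (p.1, 2 * ψ ((2:ℝ)⁻¹ • p.1) + p.2) <
      (Measure.map (fun p : (EuclideanSpace ℝ (Fin d) × ℝ) × (EuclideanSpace ℝ (Fin d) × ℝ) =>
          p.1 + p.2) (σ₀.prod σ₀)).rnDeriv volume (p.1, ‖p.1‖ ^ 2 / 2 + p.2) := by
  subst hσ hσ₀
  exact statement3_general volume (by simpa using hd) hφconv hψ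
end
end

section
/- Let p ≥ 2, let w(y) = |y|^{(p−2)/2} for y ∈ ℝ², and let wν_p denote the pushforward under y ↦ (y, |y|^p) of the measure on ℝ² with density w with respect to Lebesgue measure. Then: (a) the convolution wν_p ∗ wν_p is absolutely continuous with respect to Lebesgue measure on ℝ³ and its Radon–Nikodym derivative is essentially bounded; (b) the topological support of wν_p ∗ wν_p equals E_p = {(ξ, τ) ∈ ℝ² × ℝ : τ ≥ 2^{1−p}|ξ|^p}; and (c) if p > 2, there exists a function F : ℝ³ → ℝ, equal Lebesgue-almost everywhere to the Radon–Nikodym derivative of wν_p ∗ wν_p, which is continuous on E_p \ {(0,0)}, satisfies F(ξ, 2^{1−p}|ξ|^p) = π/(p√(p−1)) for every ξ ≠ 0, F(0, τ) = π/p for every τ > 0, and F(ξ, τ) < π/p for every (ξ, τ) ∈ E_p with ξ ≠ 0; in particular, for p > 2 the essential supremum of the Radon–Nikodym derivative of wν_p ∗ wν_p equals π/p and is attained only on the Lebesgue-null set {(0, τ) : τ > 0}. -/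
open MeasureTheory Filter
open scoped ENNReal

noncomputable section

abbrev R2 : Type := EuclideanSpace ℝ (Fin 2)
abbrev R3 : Type := R2 × ℝ

/-- Pushforward under `y ↦ (y, Ψ y)` of the measure with density `g`
with respect to Lebesgue measure on `ℝ²`. -/
def wProj (Ψ : R2 → ℝ) (g : R2 → ℝ) : Measure R3 :=
  Measure.map (fun y => (y, Ψ y)) (volume.withDensity fun y => ENNReal.ofReal (g y))

/-- Convolution of Borel measures on `ℝ³`. -/
def mconv (μ ν : Measure R3) : Measure R3 :=
  Measure.map (fun p : R3 × R3 => p.1 + p.2) (μ.prod ν)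

/-- Topological support of a measure on `ℝ³`. -/
def msupport (μ : Measure R3) : Set R3 :=
  {x | ∀ U : Set R3, IsOpen U → x ∈ U → μ U ≠ 0}

/-! Put `y = η + u` and `z = η - u` with midpoint `η = ξ / 2`, and use polar coordinates `u = r e`.
For a fixed unit vector `e` the energy `τ = |η + r e|^p + |η - r e|^p` is strictly increasing in
`r ≥ 0`, with derivative `p r S` for a function `S` continuous up to `r = 0`, so it can replace `r`
as a variable. The convolution thus has as density at `(ξ, τ)` the integral over all directions `e`
of `|η + r e|^((p - 2) / 2) |η - r e|^((p - 2) / 2) / (p S)`.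

Write `α` and `β` for the two weights `|η ± r e|^((p - 2) / 2)`. Then `S` is `2 α β + (α - β)²` plus
`4 ⟪η, e⟫²` times a divided difference of the increasing function `t ↦ t ^ ((p - 2) / 2)`. So
`2 α β ≤ S`, strictly if `p > 2` and `⟪η, e⟫ ≠ 0`, and the density is at most `2 π / (2 p)`, with
equality for `η = 0`. On the boundary of `E_p` the radius is `0`, and with `θ` the angle between `η`
and `e` the integrand is `1 / (2 p (1 + (p - 2) cos² θ))`. It is integrated by means of the Poisson
kernel: `1 / (A + B cos t)` is a multiple of the kernel with pole `-B / (A + √(A² - B²))`. -/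

section

open Set Topology
open scoped Real RealInnerProductSpace

section General

lemma continuousAt_uncurry_dslope_of_ne {𝕜 E : Type*} [NontriviallyNormedField 𝕜]
    [NormedAddCommGroup E] [NormedSpace 𝕜 E] {f : 𝕜 → E} {a b : 𝕜} (hab : b ≠ a)
    (ha : ContinuousAt f a) (hb : ContinuousAt f b) :
    ContinuousAt (fun z : 𝕜 × 𝕜 => dslope f z.1 z.2) (a, b) := by
  have hslope : (fun z : 𝕜 × 𝕜 => (z.2 - z.1)⁻¹ • (f z.2 - f z.1)) =ᶠ[𝓝 (a, b)]
      fun z => dslope f z.1 z.2 := by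
    filter_upwards [(isOpen_ne_fun continuous_snd continuous_fst).mem_nhds hab] with z hz
    rw [dslope_of_ne f hz, slope_def_module]
  refine ContinuousAt.congr ?_ hslope
  exact ((continuousAt_snd.sub continuousAt_fst).inv₀ (sub_ne_zero.2 hab)).smul
    ((hb.comp continuousAt_snd).sub (ha.comp continuousAt_fst))

lemma continuousAt_uncurry_dslope_diag {𝕜 E : Type*} [NontriviallyNormedField 𝕜]
    [NormedAddCommGroup E] [NormedSpace 𝕜 E] {f : 𝕜 → E} {a : 𝕜}
    (hf : HasStrictDerivAt f (deriv f a) a) (hf' : ContinuousAt (deriv f) a) :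
    ContinuousAt (fun z : 𝕜 × 𝕜 => dslope f z.1 z.2) (a, a) := by
  have hdiag : ContinuousAt (fun z : 𝕜 × 𝕜 => deriv f z.1) (a, a) :=
    hf'.comp_of_eq continuousAt_fst rfl
  rw [Metric.continuousAt_iff'] at hdiag ⊢
  intro ε hε
  filter_upwards [hf.isLittleO.def (half_pos hε), hdiag ε hε] with z hz hz_diag
  obtain h | h := eq_or_ne z.1 z.2
  · rwa [← h, dslope_same, dslope_same]
  · have hpos : 0 < ‖z.1 - z.2‖ := norm_pos_iff.2 (sub_ne_zero.2 h)
    have hsplit : dslope f z.1 z.2 - dslope f a a =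
        (z.1 - z.2)⁻¹ • (f z.1 - f z.2 - (z.1 - z.2) • deriv f a) := by
      rw [dslope_same, dslope_of_ne f h.symm, slope_comm, slope_def_module, smul_sub _ (_ - _),
        inv_smul_smul₀ (sub_ne_zero.2 h)]
    rw [dist_eq_norm, hsplit, norm_smul, norm_inv, inv_mul_lt_iff₀ hpos]
    refine lt_of_le_of_lt hz ?_
    nlinarith

lemma dslope_rpow_nonneg {a x y : ℝ} (ha : 0 ≤ a) (hx : 0 ≤ x) (hy : 0 ≤ y) :
    0 ≤ dslope (fun t : ℝ => t ^ a) x y := by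
  obtain rfl | h := eq_or_ne y x
  · rw [dslope_same, Real.deriv_rpow_const]
    positivity
  · rw [dslope_of_ne _ h]
    exact (Real.monotoneOn_rpow_Ici_of_exponent_nonneg ha).slope_nonneg hx hy

lemma dslope_rpow_pos {a x y : ℝ} (ha : 0 < a) (hx : 0 ≤ x) (hy : 0 ≤ y) (hxy : 0 < x + y) :
    0 < dslope (fun t : ℝ => t ^ a) x y := by
  obtain rfl | h := eq_or_ne y x
  · have hy_pos : 0 < y := by linarith
    rw [dslope_same, Real.deriv_rpow_const]
    positivity
  · rw [dslope_of_ne _ h]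
    exact (Real.strictMonoOn_rpow_Ici_of_exponent_pos ha).slope_pos hx hy h.symm

lemma continuousAt_uncurry_dslope_rpow {a x y : ℝ} (ha : 0 ≤ a) (hxy : 0 < x + y) :
    ContinuousAt (fun z : ℝ × ℝ => dslope (fun t : ℝ => t ^ a) z.1 z.2) (x, y) := by
  obtain rfl | h := eq_or_ne y x
  · have hy : y ≠ 0 := by linarith
    refine continuousAt_uncurry_dslope_diag ?_ ?_
    · rw [Real.deriv_rpow_const]
      exact Real.hasStrictDerivAt_rpow_const (.inl hy)
    · rw [Real.deriv_rpow_const']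
      exact (Real.continuousAt_rpow_const _ _ (.inl hy)).const_mul a
  · exact continuousAt_uncurry_dslope_of_ne h (Real.continuousAt_rpow_const _ _ (.inr ha))
      (Real.continuousAt_rpow_const _ _ (.inr ha))

lemma continuousOn_of_strictMonoOn_Ici {X α β : Type*} [TopologicalSpace X]
    [LinearOrder α] [TopologicalSpace α] [OrderTopology α]
    [LinearOrder β] [TopologicalSpace β] [OrderClosedTopology β]
    {s : Set X} {a : α} {f : X → α → β} {g : X → α}
    (hf : ∀ t, ContinuousOn (fun x => f x t) s) (hmono : ∀ x ∈ s, StrictMonoOn (f x) (Ici a))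
    (hg : MapsTo g s (Ici a)) (hfg : ContinuousOn (fun x => f x (g x)) s) :
    ContinuousOn g s := by
  refine fun x hx => tendsto_order.2 ⟨fun t ht => ?_, fun t ht => ?_⟩
  · obtain hta | hta := lt_or_ge t a
    · filter_upwards [self_mem_nhdsWithin] with y hy using hta.trans_le (hg hy)
    · have hlt : f x t < f x (g x) := hmono x hx hta (hg hx) ht
      filter_upwards [self_mem_nhdsWithin, (hf t x hx).eventually_lt (hfg x hx) hlt] with y hy h
      exact ((hmono y hy).lt_iff_lt hta (hg hy)).1 h
  · have hta : a ≤ t := le_trans (hg hx) ht.le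
    have hlt : f x (g x) < f x t := hmono x hx (hg hx) hta ht
    filter_upwards [self_mem_nhdsWithin, (hfg x hx).eventually_lt (hf t x hx) hlt] with y hy h
    exact ((hmono y hy).lt_iff_lt (hg hy) hta).1 h

lemma rpow_eq_sq_rpow_half {x : ℝ} (hx : 0 ≤ x) (a : ℝ) : x ^ a = (x ^ 2) ^ (a / 2) := by
  rw [← Real.rpow_natCast_mul hx]
  congr 1
  push_cast
  ring

lemma rpow_eq_rpow_half_sq {x : ℝ} (hx : 0 ≤ x) (a : ℝ) : x ^ a = (x ^ (a / 2)) ^ 2 := by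
  rw [← Real.rpow_mul_natCast hx]
  congr 1
  push_cast
  ring

lemma le_essSup_of_continuousAt {X β : Type*} [TopologicalSpace X] [MeasurableSpace X]
    [CompleteLinearOrder β] [TopologicalSpace β] [OrderTopology β] [FirstCountableTopology β]
    (μ : Measure X) [μ.IsOpenPosMeasure] {f : X → β} {x : X} (hf : ContinuousAt f x) :
    f x ≤ essSup f μ := by
  by_contra! hlt
  exact (Measure.measure_pos_of_mem_nhds μ (hf.eventually_const_lt hlt)).ne' meas_essSup_lt

lemma lintegral_prod_eq_lintegral_midpoint {V : Type*} [NormedAddCommGroup V] [NormedSpace ℝ V]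
    [MeasurableSpace V] [BorelSpace V] [SecondCountableTopology V] (μ : Measure V) [SFinite μ]
    [μ.IsAddLeftInvariant] {f : V × V → ℝ≥0∞} (hf : Measurable f) :
    ∫⁻ z, f z ∂(μ.prod μ) = ∫⁻ ξ, ∫⁻ u, f ((2⁻¹ : ℝ) • ξ + u, (2⁻¹ : ℝ) • ξ - u) ∂μ ∂μ := by
  calc ∫⁻ z, f z ∂(μ.prod μ) = ∫⁻ y, ∫⁻ z, f (y, z) ∂μ ∂μ := lintegral_prod _ hf.aemeasurable
    _ = ∫⁻ y, ∫⁻ ξ, f (y, ξ - y) ∂μ ∂μ :=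
        lintegral_congr fun y => (lintegral_sub_right_eq_self (fun z => f (y, z)) y).symm
    _ = ∫⁻ ξ, ∫⁻ y, f (y, ξ - y) ∂μ ∂μ :=
        lintegral_lintegral_swap (hf.comp (by fun_prop)).aemeasurable
    _ = ∫⁻ ξ, ∫⁻ u, f ((2⁻¹ : ℝ) • ξ + u, (2⁻¹ : ℝ) • ξ - u) ∂μ ∂μ := by
        refine lintegral_congr fun ξ => ?_
        rw [← lintegral_add_left_eq_self (fun y => f (y, ξ - y)) ((2⁻¹ : ℝ) • ξ)]
        refine lintegral_congr fun u => ?_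
        congr 2
        module

lemma two_mul_norm_rpow_le {V : Type*} [SeminormedAddCommGroup V] [NormedSpace ℝ V] {p : ℝ}
    (hp : 1 ≤ p) (x u : V) : 2 * ‖x‖ ^ p ≤ ‖x + u‖ ^ p + ‖x - u‖ ^ p := by
  have hx : ‖x‖ ≤ 1 / 2 * ‖x + u‖ + 1 / 2 * ‖x - u‖ := by
    have h := norm_add_le (x + u) (x - u)
    rw [show x + u + (x - u) = (2 : ℝ) • x by module, norm_smul, Real.norm_two] at h
    linarith
  have hmean := (convexOn_rpow hp).2 (norm_nonneg (x + u)) (norm_nonneg (x - u))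
    (by norm_num : (0 : ℝ) ≤ 1 / 2) (by norm_num : (0 : ℝ) ≤ 1 / 2) (by norm_num)
  simp only [smul_eq_mul] at hmean
  linarith [Real.rpow_le_rpow (norm_nonneg x) hx (by linarith : 0 ≤ p)]

end General

section TrigIntegral

lemma poissonKernel_circleMap {A B s : ℝ} (hA : 0 < A) (hs : 0 < s)
    (hs_sq : s ^ 2 = A ^ 2 - B ^ 2) (t : ℝ) :
    poissonKernel 0 ((-B / (A + s) : ℝ) : ℂ) (circleMap 0 1 t) =
      s * (1 / (A + B * Real.cos t)) := by
  have hnum : ‖circleMap 0 1 t - 0‖ ^ 2 - ‖((-B / (A + s) : ℝ) : ℂ) - 0‖ ^ 2 =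
      2 * s / (A + s) := by
    rw [sub_zero, sub_zero, norm_circleMap_zero, Complex.norm_real, Real.norm_eq_abs, sq_abs,
      sq_abs]
    field_simp
    linear_combination -hs_sq
  have hden : ‖circleMap 0 1 t - 0 - (((-B / (A + s) : ℝ) : ℂ) - 0)‖ ^ 2 =
      2 * (A + B * Real.cos t) / (A + s) := by
    rw [sub_zero, sub_zero, ← Complex.normSq_eq_norm_sq, circleMap_zero, Complex.normSq_apply]
    simp only [Complex.ofReal_one, one_mul, Complex.sub_re, Complex.sub_im, Complex.ofReal_re,
      Complex.ofReal_im, Complex.exp_ofReal_mul_I_re, Complex.exp_ofReal_mul_I_im]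
    field_simp
    linear_combination hs_sq + (A + s) ^ 2 * Real.sin_sq_add_cos_sq t
  rw [poissonKernel_def, hnum, hden]
  field_simp

lemma integral_inv_add_mul_cos {A B : ℝ} (h : |B| < A) :
    ∫ t in 0..2 * π, 1 / (A + B * Real.cos t) = 2 * π / √(A ^ 2 - B ^ 2) := by
  have hA : 0 < A := (abs_nonneg B).trans_lt h
  have hAB : 0 < A ^ 2 - B ^ 2 := sub_pos.2 (sq_lt_sq.2 (by rwa [abs_of_pos hA]))
  set s := √(A ^ 2 - B ^ 2)
  have hs : 0 < s := Real.sqrt_pos.2 hAB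
  have hw : ((-B / (A + s) : ℝ) : ℂ) ∈ Metric.ball (0 : ℂ) 1 := by
    rw [mem_ball_zero_iff, Complex.norm_real, Real.norm_eq_abs, abs_div, abs_neg,
      abs_of_pos (a := A + s) (by positivity), div_lt_one (by positivity)]
    linarith
  have hmean := InnerProductSpace.HarmonicOnNhd.circleAverage_poissonKernel_smul (R := 1)
    (f := fun _ => 1) (fun _ _ => InnerProductSpace.harmonicAt_const 1) hw
  simp only [Real.circleAverage_def, smul_eq_mul, Pi.mul_apply, mul_one,
    poissonKernel_circleMap hA hs (Real.sq_sqrt hAB.le),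
    intervalIntegral.integral_const_mul] at hmean
  rw [eq_div_iff hs.ne']
  field_simp at hmean
  linarith

lemma integral_inv_one_add_mul_cos_sub_sq {k : ℝ} (hk : -1 < k) (α : ℝ) :
    ∫ θ in -π..π, 1 / (1 + k * Real.cos (θ - α) ^ 2) = 2 * π / √(1 + k) := by
  set g : ℝ → ℝ := fun t => 1 / (1 + k / 2 + k / 2 * Real.cos t) with hg
  have hk' : |k / 2| < 1 + k / 2 := abs_lt.2 ⟨by linarith, by linarith⟩
  have hg_cont : Continuous g := by
    refine continuous_const.div (by fun_prop) fun t => ne_of_gt ?_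
    have habs : |k / 2 * Real.cos t| ≤ |k / 2| := by
      simpa [abs_mul] using mul_le_mul_of_nonneg_left (Real.abs_cos_le_one t) (abs_nonneg (k / 2))
    linarith [neg_le_of_abs_le habs]
  have hper : Function.Periodic g (2 * π) := fun t => by simp only [hg, Real.cos_add_two_pi]
  calc ∫ θ in -π..π, 1 / (1 + k * Real.cos (θ - α) ^ 2) = ∫ θ in -π..π, g (2 * θ - 2 * α) := by
        refine intervalIntegral.integral_congr fun θ _ => ?_
        simp only [hg, ← mul_sub, Real.cos_two_mul]
        ring_nf
    _ = 2⁻¹ * ∫ t in (2 * -π - 2 * α)..(2 * -π - 2 * α + (2 : ℤ) • (2 * π)), g t := by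
        rw [intervalIntegral.integral_comp_mul_sub g two_ne_zero, smul_eq_mul]
        congr 2
        rw [zsmul_eq_mul]
        push_cast
        ring
    _ = ∫ t in 0..2 * π, g t := by
        rw [hper.intervalIntegral_add_zsmul_eq _ _ fun _ _ => hg_cont.intervalIntegrable _ _,
          hper.intervalIntegral_add_eq _ 0, zero_add, zsmul_eq_mul]
        push_cast
        ring
    _ = 2 * π / √(1 + k) := by
        rw [integral_inv_add_mul_cos hk']
        congr 2
        ring

end TrigIntegral

section Chord

variable {V : Type*} [NormedAddCommGroup V] [InnerProductSpace ℝ V] {p r τ : ℝ} {η e : V}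

/-- The sum `|η + r e|^p + |η - r e|^p`: the height `τ` of the sum of the two points of the graph
of `|·|^p` lying over the endpoints of the chord with midpoint `η`, direction `e` and half-length
`r`. -/
def pairEnergy (p : ℝ) (η e : V) (r : ℝ) : ℝ := ‖η + r • e‖ ^ p + ‖η - r • e‖ ^ p

/-- The quotient of `deriv (pairEnergy p η e) r` by `p * r`, extended to `r = 0` by means of the
divided difference of `t ↦ t ^ ((p - 2) / 2)`. -/
def radialSlope (p : ℝ) (η e : V) (r : ℝ) : ℝ :=
  ‖η + r • e‖ ^ (p - 2) + ‖η - r • e‖ ^ (p - 2) + 4 * ⟪η, e⟫ ^ 2 *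
    dslope (fun t : ℝ => t ^ ((p - 2) / 2)) (‖η + r • e‖ ^ 2) (‖η - r • e‖ ^ 2)

/-- The density, as a function of `τ = pairEnergy p η e r`, of the weights `|η ± r e|^((p - 2) / 2)`
integrated against `r dr`. -/
def fiberDensity (p : ℝ) (η e : V) (r : ℝ) : ℝ :=
  ‖η + r • e‖ ^ ((p - 2) / 2) * ‖η - r • e‖ ^ ((p - 2) / 2) / (p * radialSlope p η e r)

/-- The radius `r ≥ 0` with `pairEnergy p η e r = τ`. Heights below the minimum `2 * ‖η‖ ^ p` are
replaced by that minimum, for which the radius is `0`. -/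
def energyRadius (p : ℝ) (η e : V) (τ : ℝ) : ℝ :=
  Function.invFunOn (pairEnergy p η e) (Ici 0) (max τ (2 * ‖η‖ ^ p))

lemma norm_add_smul_sq_add_norm_sub_smul_sq (he : ‖e‖ = 1) :
    ‖η + r • e‖ ^ 2 + ‖η - r • e‖ ^ 2 = 2 * (‖η‖ ^ 2 + r ^ 2) := by
  have h := parallelogram_law_with_norm ℝ η (r • e)
  have hr : ‖r • e‖ * ‖r • e‖ = r ^ 2 := by
    rw [norm_smul, he, mul_one, Real.norm_eq_abs, abs_mul_abs_self, sq]
  linarith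

lemma norm_add_smul_sq_sub_norm_sub_smul_sq :
    ‖η + r • e‖ ^ 2 - ‖η - r • e‖ ^ 2 = 4 * r * ⟪η, e⟫ := by
  rw [norm_add_sq_real, norm_sub_sq_real, inner_smul_right]
  ring

lemma norm_add_smul_sq_add_norm_sub_smul_sq_pos (he : ‖e‖ = 1) (h : η ≠ 0 ∨ r ≠ 0) :
    0 < ‖η + r • e‖ ^ 2 + ‖η - r • e‖ ^ 2 := by
  rw [norm_add_smul_sq_add_norm_sub_smul_sq he]
  obtain h | h := h <;> positivity

lemma norm_add_smul_rpow_sub_norm_sub_smul_rpow (p : ℝ) (η e : V) (r : ℝ) :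
    ‖η + r • e‖ ^ (p - 2) - ‖η - r • e‖ ^ (p - 2) = 4 * r * ⟪η, e⟫ *
      dslope (fun t : ℝ => t ^ ((p - 2) / 2)) (‖η + r • e‖ ^ 2) (‖η - r • e‖ ^ 2) := by
  have h := sub_smul_dslope (fun t : ℝ => t ^ ((p - 2) / 2)) (‖η + r • e‖ ^ 2) (‖η - r • e‖ ^ 2)
  rw [smul_eq_mul, ← rpow_eq_sq_rpow_half (norm_nonneg _), ← rpow_eq_sq_rpow_half (norm_nonneg _)]
    at h
  rw [← norm_add_smul_sq_sub_norm_sub_smul_sq]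
  linarith

lemma continuous_pairEnergy (hp : 0 ≤ p) :
    Continuous fun z : V × V × ℝ => pairEnergy p z.1 z.2.1 z.2.2 := by
  unfold pairEnergy
  exact (Continuous.rpow_const (by fun_prop) fun _ => .inr hp).add
    (Continuous.rpow_const (by fun_prop) fun _ => .inr hp)

lemma hasDerivAt_pairEnergy (hp : 1 < p) (he : ‖e‖ = 1) (r : ℝ) :
    HasDerivAt (pairEnergy p η e) (p * r * radialSlope p η e r) r := by
  have hplus : HasDerivAt (fun s : ℝ => η + s • e) e r := by
    simpa using ((hasDerivAt_id r).smul_const e).const_add η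
  have hminus : HasDerivAt (fun s : ℝ => η - s • e) (-e) r := by
    simpa using ((hasDerivAt_id r).smul_const e).const_sub η
  refine (((hasFDerivAt_norm_rpow (η + r • e) hp).comp_hasDerivAt r hplus).add
    ((hasFDerivAt_norm_rpow (η - r • e) hp).comp_hasDerivAt r hminus)).congr_deriv ?_
  have hee : ⟪e, e⟫ = 1 := by rw [real_inner_self_eq_norm_sq, he, one_pow]
  simp only [smul_apply, innerSL_apply_apply, inner_add_left, inner_sub_left,
    inner_neg_right, real_inner_smul_left, hee, smul_eq_mul, radialSlope]
  linear_combination (p * ⟪η, e⟫) * norm_add_smul_rpow_sub_norm_sub_smul_rpow p η e r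

lemma radialSlope_eq (p : ℝ) (η e : V) (r : ℝ) :
    radialSlope p η e r = 2 * (‖η + r • e‖ ^ ((p - 2) / 2) * ‖η - r • e‖ ^ ((p - 2) / 2)) +
      (‖η + r • e‖ ^ ((p - 2) / 2) - ‖η - r • e‖ ^ ((p - 2) / 2)) ^ 2 + 4 * ⟪η, e⟫ ^ 2 *
        dslope (fun t : ℝ => t ^ ((p - 2) / 2)) (‖η + r • e‖ ^ 2) (‖η - r • e‖ ^ 2) := by
  rw [radialSlope, rpow_eq_rpow_half_sq (norm_nonneg (η + r • e)),
    rpow_eq_rpow_half_sq (norm_nonneg (η - r • e))]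
  ring

lemma two_mul_weights_le_radialSlope (hp : 2 ≤ p) (η e : V) (r : ℝ) :
    2 * (‖η + r • e‖ ^ ((p - 2) / 2) * ‖η - r • e‖ ^ ((p - 2) / 2)) ≤ radialSlope p η e r := by
  have hslope := dslope_rpow_nonneg (a := (p - 2) / 2) (by linarith) (sq_nonneg ‖η + r • e‖)
    (sq_nonneg ‖η - r • e‖)
  rw [radialSlope_eq, add_assoc]
  exact le_add_of_nonneg_right (by positivity)

lemma two_mul_weights_lt_radialSlope (hp : 2 < p) (he : ‖e‖ = 1) (hη : ⟪η, e⟫ ≠ 0) :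
    2 * (‖η + r • e‖ ^ ((p - 2) / 2) * ‖η - r • e‖ ^ ((p - 2) / 2)) < radialSlope p η e r := by
  have hη_ne : η ≠ 0 := fun h => hη (by rw [h, inner_zero_left])
  have hslope := dslope_rpow_pos (a := (p - 2) / 2) (by linarith) (sq_nonneg ‖η + r • e‖)
    (sq_nonneg ‖η - r • e‖) (norm_add_smul_sq_add_norm_sub_smul_sq_pos he (.inl hη_ne))
  rw [radialSlope_eq, add_assoc]
  exact lt_add_of_pos_right _ (by positivity)

lemma radialSlope_nonneg (hp : 2 ≤ p) (η e : V) (r : ℝ) : 0 ≤ radialSlope p η e r :=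
  le_trans (by positivity) (two_mul_weights_le_radialSlope hp η e r)

lemma radialSlope_pos (hp : 2 ≤ p) (he : ‖e‖ = 1) (h : η ≠ 0 ∨ r ≠ 0) :
    0 < radialSlope p η e r := by
  have hsum := norm_add_smul_sq_add_norm_sub_smul_sq_pos he h
  have hslope := dslope_rpow_nonneg (a := (p - 2) / 2) (by linarith) (sq_nonneg ‖η + r • e‖)
    (sq_nonneg ‖η - r • e‖)
  have hends : 0 < ‖η + r • e‖ ∨ 0 < ‖η - r • e‖ := by
    by_contra! hle
    nlinarith [norm_nonneg (η + r • e), norm_nonneg (η - r • e)]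
  unfold radialSlope
  obtain hend | hend := hends <;> positivity

lemma radialSlope_zero_left (he : ‖e‖ = 1) :
    radialSlope p (0 : V) e r = 2 * |r| ^ (p - 2) := by
  simp only [radialSlope, zero_add, zero_sub, norm_neg, norm_smul, he, mul_one, inner_zero_left,
    Real.norm_eq_abs]
  ring

lemma radialSlope_zero_right (hη : η ≠ 0) :
    radialSlope p η e 0 = 2 * ‖η‖ ^ (p - 2) * (1 + (p - 2) * (⟪η, e⟫ ^ 2 / ‖η‖ ^ 2)) := by
  have hη_pos : 0 < ‖η‖ := norm_pos_iff.2 hη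
  have hexp : (‖η‖ ^ 2) ^ ((p - 2) / 2 - 1) = ‖η‖ ^ (p - 2) / ‖η‖ ^ 2 := by
    rw [Real.rpow_sub_one (by positivity), ← rpow_eq_sq_rpow_half hη_pos.le]
  rw [radialSlope, zero_smul, add_zero, sub_zero, dslope_same, Real.deriv_rpow_const, hexp]
  ring

lemma fiberDensity_nonneg (hp : 2 ≤ p) (η e : V) (r : ℝ) : 0 ≤ fiberDensity p η e r := by
  have hslope := radialSlope_nonneg hp η e r
  unfold fiberDensity
  positivity

lemma fiberDensity_le (hp : 2 ≤ p) (η e : V) (r : ℝ) :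
    fiberDensity p η e r ≤ 1 / (2 * p) := by
  have hslope := radialSlope_nonneg hp η e r
  refine div_le_of_le_mul₀ (by positivity) (by positivity) ?_
  field_simp
  linarith [two_mul_weights_le_radialSlope hp η e r]

lemma fiberDensity_lt (hp : 2 < p) (he : ‖e‖ = 1) (hη : ⟪η, e⟫ ≠ 0) :
    fiberDensity p η e r < 1 / (2 * p) := by
  have hη_ne : η ≠ 0 := fun h => hη (by rw [h, inner_zero_left])
  have hslope := radialSlope_pos (r := r) hp.le he (.inl hη_ne)
  rw [fiberDensity, div_lt_div_iff₀ (by positivity) (by positivity)]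
  nlinarith [two_mul_weights_lt_radialSlope (r := r) hp he hη]

lemma fiberDensity_zero_left (he : ‖e‖ = 1) (hr : r ≠ 0) :
    fiberDensity p (0 : V) e r = 1 / (2 * p) := by
  rw [fiberDensity, radialSlope_zero_left he, rpow_eq_rpow_half_sq (abs_nonneg r), zero_add,
    zero_sub, norm_neg, norm_smul, he, mul_one, Real.norm_eq_abs]
  field_simp

lemma fiberDensity_zero_right (hη : η ≠ 0) :
    fiberDensity p η e 0 = 1 / (2 * p) * (1 / (1 + (p - 2) * (⟪η, e⟫ ^ 2 / ‖η‖ ^ 2))) := by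
  rw [fiberDensity, radialSlope_zero_right hη, zero_smul, add_zero, sub_zero, ← sq,
    ← rpow_eq_rpow_half_sq (norm_nonneg η)]
  field_simp

lemma continuousAt_fiberDensity (hp : 2 ≤ p) (he : ‖e‖ = 1) (h : η ≠ 0 ∨ r ≠ 0) :
    ContinuousAt (fun z : V × V × ℝ => fiberDensity p z.1 z.2.1 z.2.2) (η, e, r) := by
  have hplus : ContinuousAt (fun z : V × V × ℝ => ‖z.1 + z.2.2 • z.2.1‖) (η, e, r) := by fun_prop
  have hminus : ContinuousAt (fun z : V × V × ℝ => ‖z.1 - z.2.2 • z.2.1‖) (η, e, r) := by fun_prop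
  have hinner : ContinuousAt (fun z : V × V × ℝ => ⟪z.1, z.2.1⟫) (η, e, r) := by fun_prop
  have hdslope := continuousAt_uncurry_dslope_rpow (a := (p - 2) / 2) (by linarith)
    (norm_add_smul_sq_add_norm_sub_smul_sq_pos he h)
  have hslope : ContinuousAt (fun z : V × V × ℝ => radialSlope p z.1 z.2.1 z.2.2) (η, e, r) :=
    ((hplus.rpow_const (.inr (by linarith))).add (hminus.rpow_const (.inr (by linarith)))).add
      (((hinner.pow 2).const_mul 4).mul
        (hdslope.comp_of_eq ((hplus.pow 2).prodMk (hminus.pow 2)) rfl))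
  refine ((hplus.rpow_const (.inr (by linarith))).mul
    (hminus.rpow_const (.inr (by linarith)))).div (hslope.const_mul p) ?_
  exact (mul_pos (by linarith) (radialSlope_pos hp he h)).ne'

lemma strictMonoOn_pairEnergy (hp : 2 ≤ p) (he : ‖e‖ = 1) :
    StrictMonoOn (pairEnergy p η e) (Ici 0) := by
  refine strictMonoOn_of_deriv_pos (convex_Ici 0)
    (fun r _ => (hasDerivAt_pairEnergy (by linarith) he r).continuousAt.continuousWithinAt)
    fun r hr => ?_
  rw [interior_Ici, mem_Ioi] at hr
  rw [(hasDerivAt_pairEnergy (by linarith) he r).deriv]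
  exact mul_pos (mul_pos (by linarith) hr) (radialSlope_pos hp he (.inr hr.ne'))

lemma two_mul_norm_rpow_le_pairEnergy (hp : 1 ≤ p) (η e : V) (r : ℝ) :
    2 * ‖η‖ ^ p ≤ pairEnergy p η e r := two_mul_norm_rpow_le hp η (r • e)

lemma two_mul_abs_rpow_le_pairEnergy (hp : 1 ≤ p) (he : ‖e‖ = 1) (η : V) (r : ℝ) :
    2 * |r| ^ p ≤ pairEnergy p η e r := by
  have h := two_mul_norm_rpow_le hp (r • e) η
  rwa [norm_smul, he, mul_one, Real.norm_eq_abs, add_comm (r • e), norm_sub_rev (r • e)] at h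

lemma pairEnergy_zero (p : ℝ) (η e : V) : pairEnergy p η e 0 = 2 * ‖η‖ ^ p := by
  rw [pairEnergy, zero_smul, add_zero, sub_zero, two_mul]

lemma tendsto_pairEnergy_atTop (hp : 1 ≤ p) (he : ‖e‖ = 1) :
    Tendsto (pairEnergy p η e) atTop atTop := by
  refine tendsto_atTop_mono' _ ?_ (tendsto_rpow_atTop (by linarith : 0 < p))
  filter_upwards [eventually_ge_atTop 0] with r hr
  have h := two_mul_abs_rpow_le_pairEnergy hp he η r
  rw [abs_of_nonneg hr] at h
  linarith [Real.rpow_nonneg hr p]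

lemma bijOn_pairEnergy (hp : 2 ≤ p) (he : ‖e‖ = 1) :
    BijOn (pairEnergy p η e) (Ici 0) (Ici (2 * ‖η‖ ^ p)) := by
  refine ⟨fun r _ => two_mul_norm_rpow_le_pairEnergy (by linarith) η e r,
    (strictMonoOn_pairEnergy hp he).injOn, fun τ hτ => ?_⟩
  have hcont : Continuous (pairEnergy p η e) := continuous_iff_continuousAt.2 fun r =>
    (hasDerivAt_pairEnergy (by linarith) he r).continuousAt
  have htendsto : Tendsto (pairEnergy p η e) atTop atTop :=
    tendsto_pairEnergy_atTop (by linarith) he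
  obtain ⟨R, hτR, hR⟩ :=
    ((htendsto.eventually_ge_atTop τ).and (eventually_ge_atTop 0)).exists
  rw [mem_Ici, ← pairEnergy_zero p η e] at hτ
  exact image_mono Icc_subset_Ici_self (intermediate_value_Icc hR hcont.continuousOn ⟨hτ, hτR⟩)

lemma energyRadius_nonneg (hp : 2 ≤ p) (he : ‖e‖ = 1) (η : V) (τ : ℝ) :
    0 ≤ energyRadius p η e τ :=
  (bijOn_pairEnergy hp he).surjOn.mapsTo_invFunOn (le_max_right τ _)

lemma pairEnergy_energyRadius (hp : 2 ≤ p) (he : ‖e‖ = 1) (η : V) (τ : ℝ) :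
    pairEnergy p η e (energyRadius p η e τ) = max τ (2 * ‖η‖ ^ p) :=
  (bijOn_pairEnergy hp he).invOn_invFunOn.2 (le_max_right τ _)

lemma energyRadius_pairEnergy (hp : 2 ≤ p) (he : ‖e‖ = 1) (hr : 0 ≤ r) :
    energyRadius p η e (pairEnergy p η e r) = r := by
  rw [energyRadius, max_eq_left (two_mul_norm_rpow_le_pairEnergy (by linarith) η e r)]
  exact (bijOn_pairEnergy hp he).invOn_invFunOn.1 hr

lemma energyRadius_two_mul_norm_rpow (hp : 2 ≤ p) (he : ‖e‖ = 1) (η : V) :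
    energyRadius p η e (2 * ‖η‖ ^ p) = 0 := by
  rw [← pairEnergy_zero p η e, energyRadius_pairEnergy hp he le_rfl]

lemma ne_zero_or_energyRadius_ne_zero (hp : 2 ≤ p) (he : ‖e‖ = 1) (h : η ≠ 0 ∨ 0 < τ) :
    η ≠ 0 ∨ energyRadius p η e τ ≠ 0 := by
  obtain rfl | hη := eq_or_ne η 0
  · refine .inr fun hr => ?_
    have hτ := pairEnergy_energyRadius hp he (0 : V) τ
    rw [hr, pairEnergy_zero, norm_zero, Real.zero_rpow (by linarith), mul_zero] at hτ
    exact (lt_max_of_lt_left (h.resolve_left (absurd rfl))).ne hτ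
  · exact .inl hη

lemma continuousOn_energyRadius (hp : 2 ≤ p) :
    ContinuousOn (fun z : V × V × ℝ => energyRadius p z.1 z.2.1 z.2.2) {z | ‖z.2.1‖ = 1} := by
  have hp_nonneg : 0 ≤ p := by linarith
  have henergy (r : ℝ) : Continuous fun z : V × V × ℝ => pairEnergy p z.1 z.2.1 r :=
    (continuous_pairEnergy hp_nonneg).comp
      (continuous_fst.prodMk (continuous_snd.fst.prodMk continuous_const))
  have hmax : Continuous fun z : V × V × ℝ => max z.2.2 (2 * ‖z.1‖ ^ p) :=
    continuous_snd.snd.max ((continuous_fst.norm.rpow_const fun _ => .inr hp_nonneg).const_mul 2)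
  exact continuousOn_of_strictMonoOn_Ici (fun r => (henergy r).continuousOn)
    (fun z hz => strictMonoOn_pairEnergy hp hz) (fun z hz => energyRadius_nonneg hp hz _ _)
    (hmax.continuousOn.congr fun z hz => pairEnergy_energyRadius hp hz _ _)

lemma lintegral_radial_eq (hp : 2 ≤ p) (he : ‖e‖ = 1) (η : V) (φ : ℝ → ℝ≥0∞) :
    ∫⁻ r in Ioi 0, ENNReal.ofReal r *
        (ENNReal.ofReal (‖η + r • e‖ ^ ((p - 2) / 2) * ‖η - r • e‖ ^ ((p - 2) / 2)) *
          φ (pairEnergy p η e r)) =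
      ∫⁻ τ in Ici (2 * ‖η‖ ^ p),
        ENNReal.ofReal (fiberDensity p η e (energyRadius p η e τ)) * φ τ := by
  rw [← (bijOn_pairEnergy hp he).image_eq, lintegral_image_eq_lintegral_abs_deriv_mul
    measurableSet_Ici (fun r _ => (hasDerivAt_pairEnergy (by linarith) he r).hasDerivWithinAt)
    (bijOn_pairEnergy hp he).injOn, ← setLIntegral_congr Ioi_ae_eq_Ici]
  refine setLIntegral_congr_fun measurableSet_Ioi fun r hr => ?_
  have hr_pos : 0 < r := hr
  have hslope := radialSlope_pos (η := η) hp he (.inr hr_pos.ne')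
  rw [energyRadius_pairEnergy hp he hr_pos.le, ← mul_assoc, ← mul_assoc,
    ← ENNReal.ofReal_mul hr_pos.le, ← ENNReal.ofReal_mul (abs_nonneg _),
    abs_of_pos (by positivity), fiberDensity]
  congr 2
  field_simp

end Chord

section Plane

variable {p τ θ : ℝ} {η : R2}

/-- The unit vector of the plane with polar angle `θ`. -/
def direction (θ : ℝ) : R2 := !₂[Real.cos θ, Real.sin θ]

lemma norm_direction (θ : ℝ) : ‖direction θ‖ = 1 := by
  rw [EuclideanSpace.norm_eq, Fin.sum_univ_two]
  simp [direction]

lemma continuous_direction : Continuous direction := by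
  unfold direction
  fun_prop

lemma inner_direction (α θ : ℝ) : ⟪direction α, direction θ⟫ = Real.cos (θ - α) := by
  simp [direction, PiLp.inner_apply, Real.cos_sub]

lemma exists_norm_smul_direction_eq (ξ : R2) : ∃ α ∈ Ioc (-π) π, ‖ξ‖ • direction α = ξ := by
  have hnorm : ‖ξ‖ = ‖Complex.mk (ξ 0) (ξ 1)‖ := by
    rw [EuclideanSpace.norm_eq, Fin.sum_univ_two, Complex.norm_eq_sqrt_sq_add_sq]
    simp
  refine ⟨_, Complex.arg_mem_Ioc ⟨ξ 0, ξ 1⟩, ?_⟩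
  rw [hnorm]
  ext i
  fin_cases i
  · exact Complex.norm_mul_cos_arg _
  · exact Complex.norm_mul_sin_arg _

lemma lintegral_eq_lintegral_direction {f : R2 → ℝ≥0∞} (hf : Measurable f) :
    ∫⁻ u, f u = ∫⁻ θ in Ioo (-π) π, ∫⁻ r in Ioi 0, ENNReal.ofReal r * f (r • direction θ) := by
  have hcoord : MeasurePreserving fun z : ℝ × ℝ => (!₂[z.1, z.2] : R2) :=
    (PiLp.volume_preserving_toLp (Fin 2)).comp (volume_preserving_finTwoArrow ℝ).symm
  have hpolar (z : ℝ × ℝ) :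
      f !₂[(polarCoord.symm z).1, (polarCoord.symm z).2] = f (z.1 • direction z.2) := by
    congr 1
    ext i
    fin_cases i <;> rfl
  have hmeas : Measurable fun z : ℝ × ℝ => ENNReal.ofReal z.1 * f (z.1 • direction z.2) :=
    measurable_fst.ennreal_ofReal.mul
      (hf.comp (continuous_fst.smul (continuous_direction.comp continuous_snd)).measurable)
  rw [← hcoord.lintegral_comp hf, ← lintegral_comp_polarCoord_symm, polarCoord_target,
    Measure.volume_eq_prod, ← Measure.prod_restrict]
  simp only [hpolar, smul_eq_mul]
  exact lintegral_prod_symm _ hmeas.aemeasurable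

/-- The contribution of the angle `θ` to the density at height `τ` over the midpoint `η`. -/
def angularDensity (p : ℝ) (η : R2) (τ θ : ℝ) : ℝ :=
  fiberDensity p η (direction θ) (energyRadius p η (direction θ) τ)

/-- The density at height `τ` over the midpoint `η`, an integral over all directions of chords. -/
def angularIntegral (p : ℝ) (η : R2) (τ : ℝ) : ℝ := ∫ θ in -π..π, angularDensity p η τ θ

lemma angularDensity_nonneg (hp : 2 ≤ p) (η : R2) (τ θ : ℝ) : 0 ≤ angularDensity p η τ θ :=
  fiberDensity_nonneg hp _ _ _

lemma angularDensity_le (hp : 2 ≤ p) (η : R2) (τ θ : ℝ) :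
    angularDensity p η τ θ ≤ 1 / (2 * p) :=
  fiberDensity_le hp _ _ _

lemma continuousAt_angularDensity (hp : 2 ≤ p) (h : η ≠ 0 ∨ 0 < τ) (θ : ℝ) :
    ContinuousAt (fun z : R2 × ℝ × ℝ => angularDensity p z.1 z.2.1 z.2.2) (η, τ, θ) := by
  have hdir : Continuous fun z : R2 × ℝ × ℝ => direction z.2.2 :=
    continuous_direction.comp continuous_snd.snd
  have hradius : Continuous fun z : R2 × ℝ × ℝ => energyRadius p z.1 (direction z.2.2) z.2.1 :=
    (continuousOn_energyRadius hp).comp_continuous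
      (continuous_fst.prodMk (hdir.prodMk continuous_snd.fst)) fun z => norm_direction z.2.2
  exact ContinuousAt.comp (x := (η, τ, θ))
    (f := fun z : R2 × ℝ × ℝ => (z.1, direction z.2.2, energyRadius p z.1 (direction z.2.2) z.2.1))
    (g := fun z : R2 × R2 × ℝ => fiberDensity p z.1 z.2.1 z.2.2)
    (continuousAt_fiberDensity hp (norm_direction θ)
      (ne_zero_or_energyRadius_ne_zero hp (norm_direction θ) h))
    (continuous_fst.prodMk (hdir.prodMk hradius)).continuousAt

lemma continuous_angularDensity (hp : 2 ≤ p) (hη : η ≠ 0) :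
    Continuous fun z : ℝ × ℝ => angularDensity p η z.1 z.2 :=
  continuous_iff_continuousAt.2 fun z =>
    ContinuousAt.comp (x := z) (f := fun z : ℝ × ℝ => (η, z))
      (g := fun z : R2 × ℝ × ℝ => angularDensity p z.1 z.2.1 z.2.2)
      (continuousAt_angularDensity hp (.inl hη) z.2) (by fun_prop)

lemma continuous_angularDensity_angle (hp : 2 ≤ p) (h : η ≠ 0 ∨ 0 < τ) :
    Continuous (angularDensity p η τ) :=
  continuous_iff_continuousAt.2 fun θ =>
    ContinuousAt.comp (x := θ) (f := fun θ : ℝ => (η, τ, θ))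
      (g := fun z : R2 × ℝ × ℝ => angularDensity p z.1 z.2.1 z.2.2)
      (continuousAt_angularDensity hp h θ) (by fun_prop)

lemma integral_one_div_two_mul (p : ℝ) : ∫ _ in -π..π, 1 / (2 * p) = π / p := by
  rw [intervalIntegral.integral_const, smul_eq_mul]
  ring

lemma angularIntegral_le (hp : 2 ≤ p) (h : η ≠ 0 ∨ 0 < τ) : angularIntegral p η τ ≤ π / p := by
  rw [← integral_one_div_two_mul]
  exact intervalIntegral.integral_mono_on (by linarith [Real.pi_pos])
    ((continuous_angularDensity_angle hp h).intervalIntegrable _ _)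
    (continuous_const.intervalIntegrable _ _) fun θ _ => angularDensity_le hp η τ θ

lemma angularIntegral_lt (hp : 2 < p) (hη : η ≠ 0) : angularIntegral p η τ < π / p := by
  obtain ⟨α, hα, hη_eq⟩ := exists_norm_smul_direction_eq η
  have hinner : ⟪η, direction α⟫ ≠ 0 := by
    rw [← hη_eq, real_inner_smul_left, inner_direction, sub_self, Real.cos_zero, mul_one]
    exact norm_ne_zero_iff.2 hη
  rw [← integral_one_div_two_mul]
  exact intervalIntegral.integral_lt_integral_of_continuousOn_of_le_of_exists_lt
    (by linarith [Real.pi_pos]) (continuous_angularDensity_angle hp.le (.inl hη)).continuousOn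
    continuousOn_const (fun θ _ => angularDensity_le hp.le η τ θ)
    ⟨α, Ioc_subset_Icc_self hα, fiberDensity_lt hp (norm_direction α) hinner⟩

lemma angularIntegral_zero_left (hp : 2 ≤ p) (hτ : 0 < τ) :
    angularIntegral p (0 : R2) τ = π / p := by
  rw [← integral_one_div_two_mul]
  refine intervalIntegral.integral_congr fun θ _ => fiberDensity_zero_left (norm_direction θ) ?_
  exact (ne_zero_or_energyRadius_ne_zero hp (norm_direction θ) (.inr hτ)).resolve_left
    (absurd rfl)

lemma angularIntegral_two_mul_norm_rpow (hp : 2 ≤ p) (hη : η ≠ 0) :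
    angularIntegral p η (2 * ‖η‖ ^ p) = π / (p * √(p - 1)) := by
  obtain ⟨α, -, hη_eq⟩ := exists_norm_smul_direction_eq η
  have hinner (θ : ℝ) : ⟪η, direction θ⟫ ^ 2 / ‖η‖ ^ 2 = Real.cos (θ - α) ^ 2 := by
    have h : ⟪η, direction θ⟫ = ‖η‖ * Real.cos (θ - α) := by
      conv_lhs => rw [← hη_eq, real_inner_smul_left, inner_direction]
    rw [h]
    field_simp
  have hdensity (θ : ℝ) : angularDensity p η (2 * ‖η‖ ^ p) θ =
      1 / (2 * p) * (1 / (1 + (p - 2) * Real.cos (θ - α) ^ 2)) := by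
    rw [angularDensity, energyRadius_two_mul_norm_rpow hp (norm_direction θ),
      fiberDensity_zero_right hη, hinner]
  simp only [angularIntegral, hdensity]
  rw [intervalIntegral.integral_const_mul, integral_inv_one_add_mul_cos_sub_sq (by linarith),
    show 1 + (p - 2) = p - 1 by ring]
  field_simp

lemma continuousAt_angularIntegral (hp : 2 ≤ p) (h : η ≠ 0 ∨ 0 < τ) :
    ContinuousAt (fun q : R2 × ℝ => angularIntegral p q.1 q.2) (η, τ) := by
  have hnear : ∀ᶠ q : R2 × ℝ in 𝓝 (η, τ), q.1 ≠ 0 ∨ 0 < q.2 :=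
    ((isOpen_ne_fun continuous_fst continuous_const).union
      (isOpen_lt continuous_const continuous_snd)).mem_nhds h
  refine intervalIntegral.continuousAt_of_dominated_interval (bound := fun _ => 1 / (2 * p))
    ?_ ?_ (continuous_const.intervalIntegrable _ _) (ae_of_all _ fun θ _ => ?_)
  · filter_upwards [hnear] with q hq
    exact (continuous_angularDensity_angle hp hq).aestronglyMeasurable
  · refine .of_forall fun q => ae_of_all _ fun θ _ => ?_
    rw [Real.norm_of_nonneg (angularDensity_nonneg hp _ _ _)]
    exact angularDensity_le hp _ _ _
  · exact ContinuousAt.comp (x := (η, τ)) (f := fun q : R2 × ℝ => (q.1, q.2, θ))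
      (g := fun z : R2 × ℝ × ℝ => angularDensity p z.1 z.2.1 z.2.2)
      (continuousAt_angularDensity hp h θ) (by fun_prop)

lemma lintegral_angularDensity (hp : 2 ≤ p) (h : η ≠ 0 ∨ 0 < τ) :
    ∫⁻ θ in Ioo (-π) π, ENNReal.ofReal (angularDensity p η τ θ) =
      ENNReal.ofReal (angularIntegral p η τ) := by
  have hπ : -π ≤ π := by linarith [Real.pi_pos]
  rw [angularIntegral, intervalIntegral.integral_of_le hπ, ofReal_integral_eq_lintegral_ofReal,
    setLIntegral_congr Ioo_ae_eq_Ioc]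
  · exact (continuous_angularDensity_angle hp h).integrableOn_Ioc
  · exact ae_of_all _ fun θ => angularDensity_nonneg hp η τ θ

lemma lintegral_weights_mul_energy (hp : 2 ≤ p) (hη : η ≠ 0) {φ : ℝ → ℝ≥0∞} (hφ : Measurable φ) :
    ∫⁻ u, ENNReal.ofReal (‖η + u‖ ^ ((p - 2) / 2) * ‖η - u‖ ^ ((p - 2) / 2)) *
        φ (‖η + u‖ ^ p + ‖η - u‖ ^ p) =
      ∫⁻ τ in Ici (2 * ‖η‖ ^ p), ENNReal.ofReal (angularIntegral p η τ) * φ τ := by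
  have hdensity : Measurable fun z : ℝ × ℝ => ENNReal.ofReal (angularDensity p η z.1 z.2) :=
    (continuous_angularDensity hp hη).measurable.ennreal_ofReal
  have hprod : Measurable fun z : ℝ × ℝ =>
      ENNReal.ofReal (angularDensity p η z.2 z.1) * φ z.2 :=
    (hdensity.comp measurable_swap).mul (hφ.comp measurable_snd)
  rw [lintegral_eq_lintegral_direction (by fun_prop)]
  calc _ = ∫⁻ θ in Ioo (-π) π, ∫⁻ τ in Ici (2 * ‖η‖ ^ p),
        ENNReal.ofReal (angularDensity p η τ θ) * φ τ :=
        lintegral_congr fun θ => lintegral_radial_eq hp (norm_direction θ) η φ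
    _ = ∫⁻ τ in Ici (2 * ‖η‖ ^ p), ∫⁻ θ in Ioo (-π) π,
        ENNReal.ofReal (angularDensity p η τ θ) * φ τ :=
        lintegral_lintegral_swap hprod.aemeasurable
    _ = ∫⁻ τ in Ici (2 * ‖η‖ ^ p), ENNReal.ofReal (angularIntegral p η τ) * φ τ := by
        refine lintegral_congr fun τ => ?_
        rw [lintegral_mul_const _
          (continuous_angularDensity_angle hp (.inl hη)).measurable.ennreal_ofReal,
          lintegral_angularDensity hp (.inl hη)]

end Plane

section Convolution

variable {p τ : ℝ} {ξ : R2} {q : R3}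

lemma mconv_wProj {Ψ Φ : R2 → ℝ} (hΨ : Measurable Ψ) (hΦ : Measurable Φ) (g h : R2 → ℝ) :
    mconv (wProj Ψ g) (wProj Φ h) =
      ((volume.withDensity fun y => ENNReal.ofReal (g y)).prod
        (volume.withDensity fun y => ENNReal.ofReal (h y))).map
          fun z => (z.1 + z.2, Ψ z.1 + Φ z.2) := by
  have hΨ_graph : Measurable fun y => (y, Ψ y) := measurable_id.prodMk hΨ
  have hΦ_graph : Measurable fun y => (y, Φ y) := measurable_id.prodMk hΦ
  rw [mconv, wProj, wProj, Measure.map_prod_map _ _ hΨ_graph hΦ_graph,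
    Measure.map_map (by fun_prop) (hΨ_graph.prodMap hΦ_graph)]
  rfl

lemma msupport_map {X : Type*} [TopologicalSpace X] [MeasurableSpace X] [OpensMeasurableSpace X]
    (μ : Measure X) [μ.IsOpenPosMeasure] {T : X → R3} (hT : Continuous T) :
    msupport (μ.map T) = closure (range T) := by
  ext x
  rw [mem_closure_iff]
  refine forall₃_congr fun U hU _ => ?_
  rw [Measure.map_apply hT.measurable hU.measurableSet, Ne,
    (hU.preimage hT).measure_eq_zero_iff μ, ← Ne, ← nonempty_iff_ne_empty, nonempty_preimage_iff]

/-- The measure `|y|^((p - 2) / 2) dy`, whose pushforward to the graph of `|·|^p` is `wν_p`. -/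
abbrev weightedVolume (p : ℝ) : Measure R2 :=
  volume.withDensity fun y => ENNReal.ofReal (‖y‖ ^ ((p - 2) / 2))

instance (p : ℝ) : (weightedVolume p).IsOpenPosMeasure := by
  refine (withDensity_absolutelyContinuous' (by fun_prop) ?_).isOpenPosMeasure
  filter_upwards [Measure.ae_ne volume (0 : R2)] with y hy
  exact (ENNReal.ofReal_pos.2 (by positivity)).ne'

/-- The sum of the two points of the graph of `|·|^p` lying over a pair of points of the plane. -/
def pairSumMap (p : ℝ) (z : R2 × R2) : R3 := (z.1 + z.2, ‖z.1‖ ^ p + ‖z.2‖ ^ p)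

lemma continuous_pairSumMap (hp : 0 ≤ p) : Continuous (pairSumMap p) :=
  (continuous_fst.add continuous_snd).prodMk
    ((continuous_fst.norm.rpow_const fun _ => .inr hp).add
      (continuous_snd.norm.rpow_const fun _ => .inr hp))

lemma mconv_eq_map_pairSumMap (p : ℝ) :
    mconv (wProj (fun y => ‖y‖ ^ p) fun y => ‖y‖ ^ ((p - 2) / 2))
      (wProj (fun y => ‖y‖ ^ p) fun y => ‖y‖ ^ ((p - 2) / 2)) =
      ((weightedVolume p).prod (weightedVolume p)).map (pairSumMap p) :=
  mconv_wProj (by fun_prop) (by fun_prop) _ _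

/-- The region `E_p` of sums of two points of the graph of `|·|^p`. -/
def energyRegion (p : ℝ) : Set R3 := {q | (2 : ℝ) ^ (1 - p) * ‖q.1‖ ^ p ≤ q.2}

lemma isClosed_energyRegion (hp : 0 ≤ p) : IsClosed (energyRegion p) :=
  isClosed_le ((continuous_fst.norm.rpow_const fun _ => .inr hp).const_mul _) continuous_snd

lemma two_mul_norm_half_smul_rpow (p : ℝ) (ξ : R2) :
    2 * ‖(2⁻¹ : ℝ) • ξ‖ ^ p = (2 : ℝ) ^ (1 - p) * ‖ξ‖ ^ p := by
  rw [norm_smul, Real.norm_of_nonneg (by norm_num), Real.mul_rpow (by norm_num) (norm_nonneg ξ),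
    Real.inv_rpow zero_le_two, Real.rpow_sub two_pos, Real.rpow_one]
  ring

lemma mem_energyRegion_iff : q ∈ energyRegion p ↔ 2 * ‖(2⁻¹ : ℝ) • q.1‖ ^ p ≤ q.2 := by
  rw [two_mul_norm_half_smul_rpow]
  rfl

lemma ne_zero_or_pos_of_mem_energyRegion (hp : p ≠ 0) (hq : q ∈ energyRegion p) (hq_ne : q ≠ 0) :
    (2⁻¹ : ℝ) • q.1 ≠ 0 ∨ 0 < q.2 := by
  rw [mem_energyRegion_iff] at hq
  by_contra! h
  rw [h.1, norm_zero, Real.zero_rpow hp, mul_zero] at hq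
  exact hq_ne (Prod.ext ((smul_eq_zero_iff_right (by norm_num)).1 h.1) (le_antisymm h.2 hq))

lemma pairSumMap_midpoint (p : ℝ) (ξ u : R2) :
    pairSumMap p ((2⁻¹ : ℝ) • ξ + u, (2⁻¹ : ℝ) • ξ - u) =
      (ξ, ‖(2⁻¹ : ℝ) • ξ + u‖ ^ p + ‖(2⁻¹ : ℝ) • ξ - u‖ ^ p) :=
  Prod.ext (by simp only [pairSumMap]; module) rfl

lemma range_pairSumMap (hp : 2 ≤ p) : range (pairSumMap p) = energyRegion p := by
  refine Subset.antisymm ?_ fun q hq => ?_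
  · rintro _ ⟨⟨y, z⟩, rfl⟩
    have h := two_mul_norm_rpow_le (by linarith : 1 ≤ p)
      ((2⁻¹ : ℝ) • (y + z)) ((2⁻¹ : ℝ) • (y - z))
    rw [show (2⁻¹ : ℝ) • (y + z) + (2⁻¹ : ℝ) • (y - z) = y by module,
      show (2⁻¹ : ℝ) • (y + z) - (2⁻¹ : ℝ) • (y - z) = z by module] at h
    exact mem_energyRegion_iff.2 h
  · obtain ⟨r, -, hr⟩ :=
      (bijOn_pairEnergy hp (norm_direction 0)).surjOn (mem_energyRegion_iff.1 hq)
    exact ⟨_, (pairSumMap_midpoint p q.1 (r • direction 0)).trans (Prod.ext rfl hr)⟩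

lemma msupport_map_pairSumMap (hp : 2 ≤ p) :
    msupport (((weightedVolume p).prod (weightedVolume p)).map (pairSumMap p)) =
      energyRegion p := by
  rw [msupport_map _ (continuous_pairSumMap (by linarith)), range_pairSumMap hp,
    (isClosed_energyRegion (by linarith)).closure_eq]

/-- The density of the convolution `wν_p ∗ wν_p`, with the value `0` at the origin, where it has no
limit along `E_p` if `p > 2`. -/
def convDensity (p : ℝ) : R3 → ℝ :=
  (energyRegion p \ {0}).indicator fun q => angularIntegral p ((2⁻¹ : ℝ) • q.1) q.2

lemma convDensity_of_mem (hq : q ∈ energyRegion p) (hq_ne : q ≠ 0) :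
    convDensity p q = angularIntegral p ((2⁻¹ : ℝ) • q.1) q.2 :=
  indicator_of_mem (s := energyRegion p \ {0}) ⟨hq, hq_ne⟩ _

lemma convDensity_le (hp : 2 ≤ p) (q : R3) : convDensity p q ≤ π / p := by
  by_cases hq : q ∈ energyRegion p \ {0}
  · rw [convDensity_of_mem hq.1 hq.2]
    exact angularIntegral_le hp (ne_zero_or_pos_of_mem_energyRegion (by linarith) hq.1 hq.2)
  · rw [convDensity, indicator_of_notMem hq]
    positivity

lemma convDensity_lt (hp : 2 < p) (hξ : q.1 ≠ 0) : convDensity p q < π / p := by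
  by_cases hq : q ∈ energyRegion p \ {0}
  · rw [convDensity_of_mem hq.1 hq.2]
    exact angularIntegral_lt hp (smul_ne_zero (by norm_num) hξ)
  · rw [convDensity, indicator_of_notMem hq]
    positivity

lemma convDensity_zero_left (hp : 2 ≤ p) (hτ : 0 < τ) : convDensity p (0, τ) = π / p := by
  have hmem : ((0 : R2), τ) ∈ energyRegion p := by
    rw [mem_energyRegion_iff, smul_zero, norm_zero, Real.zero_rpow (by linarith), mul_zero]
    exact hτ.le
  rw [convDensity_of_mem hmem fun h => hτ.ne' (congrArg Prod.snd h), smul_zero,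
    angularIntegral_zero_left hp hτ]

lemma convDensity_boundary (hp : 2 ≤ p) (hξ : ξ ≠ 0) :
    convDensity p (ξ, (2 : ℝ) ^ (1 - p) * ‖ξ‖ ^ p) = π / (p * √(p - 1)) := by
  have hmem : (ξ, (2 : ℝ) ^ (1 - p) * ‖ξ‖ ^ p) ∈ energyRegion p :=
    le_refl ((2 : ℝ) ^ (1 - p) * ‖ξ‖ ^ p)
  rw [convDensity_of_mem hmem fun h => hξ (congrArg Prod.fst h), ← two_mul_norm_half_smul_rpow,
    angularIntegral_two_mul_norm_rpow hp (smul_ne_zero (by norm_num) hξ)]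

lemma convDensity_of_ne_zero (hξ : ξ ≠ 0) (τ : ℝ) :
    convDensity p (ξ, τ) =
      (Ici (2 * ‖(2⁻¹ : ℝ) • ξ‖ ^ p)).indicator (angularIntegral p ((2⁻¹ : ℝ) • ξ)) τ := by
  have hne : (ξ, τ) ≠ (0 : R3) := fun h => hξ (congrArg Prod.fst h)
  have hiff : (ξ, τ) ∈ energyRegion p ↔ τ ∈ Ici (2 * ‖(2⁻¹ : ℝ) • ξ‖ ^ p) := mem_energyRegion_iff
  by_cases hq : (ξ, τ) ∈ energyRegion p
  · rw [convDensity_of_mem hq hne, indicator_of_mem (hiff.1 hq)]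
  · rw [convDensity, indicator_of_notMem fun h => hq h.1, indicator_of_notMem (hiff.not.1 hq)]

lemma continuousOn_convDensity (hp : 2 ≤ p) :
    ContinuousOn (convDensity p) (energyRegion p \ {0}) := by
  have hcont : ContinuousOn (fun q : R3 => angularIntegral p ((2⁻¹ : ℝ) • q.1) q.2)
      (energyRegion p \ {0}) := fun q hq => ContinuousAt.continuousWithinAt <|
    ContinuousAt.comp (x := q) (f := fun q : R3 => ((2⁻¹ : ℝ) • q.1, q.2))
      (g := fun q : R2 × ℝ => angularIntegral p q.1 q.2)
      (continuousAt_angularIntegral hp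
        (ne_zero_or_pos_of_mem_energyRegion (by linarith) hq.1 hq.2)) (by fun_prop)
  exact hcont.congr fun q hq => convDensity_of_mem hq.1 hq.2

lemma continuousAt_convDensity_zero_left (hp : 2 ≤ p) (hτ : 0 < τ) :
    ContinuousAt (convDensity p) (0, τ) := by
  have hlow : Continuous fun q : R3 => (2 : ℝ) ^ (1 - p) * ‖q.1‖ ^ p :=
    (continuous_fst.norm.rpow_const fun _ => .inr (by linarith)).const_mul _
  have hτ_low : (2 : ℝ) ^ (1 - p) * ‖(0 : R2)‖ ^ p < τ := by
    rwa [norm_zero, Real.zero_rpow (by linarith), mul_zero]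
  refine (continuousOn_convDensity hp).continuousAt (Filter.inter_mem ?_ ?_)
  · filter_upwards [(isOpen_lt hlow continuous_snd).mem_nhds hτ_low] with q hq using le_of_lt hq
  · exact isOpen_compl_singleton.mem_nhds fun h => hτ.ne' (congrArg Prod.snd h)

lemma measurable_convDensity (hp : 2 ≤ p) : Measurable (convDensity p) := by
  classical
  have hmeas : MeasurableSet (energyRegion p \ {0}) :=
    (isClosed_energyRegion (by linarith)).measurableSet.diff (measurableSet_singleton 0)
  have h := (continuousOn_convDensity hp).measurable_piecewise continuous_zero.continuousOn hmeas
  rwa [piecewise_eq_indicator, convDensity, indicator_indicator, inter_self] at h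

lemma lintegral_convDensity_mul (hp : 2 ≤ p) (hξ : ξ ≠ 0) {φ : R3 → ℝ≥0∞} (hφ : Measurable φ) :
    ∫⁻ τ, ENNReal.ofReal (convDensity p (ξ, τ)) * φ (ξ, τ) =
      ∫⁻ u, ENNReal.ofReal (‖(2⁻¹ : ℝ) • ξ + u‖ ^ ((p - 2) / 2)) *
        ENNReal.ofReal (‖(2⁻¹ : ℝ) • ξ - u‖ ^ ((p - 2) / 2)) *
          φ (pairSumMap p ((2⁻¹ : ℝ) • ξ + u, (2⁻¹ : ℝ) • ξ - u)) := by
  have hη : (2⁻¹ : ℝ) • ξ ≠ 0 := smul_ne_zero (by norm_num) hξ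
  simp only [pairSumMap_midpoint, ← ENNReal.ofReal_mul (Real.rpow_nonneg (norm_nonneg _) _)]
  rw [lintegral_weights_mul_energy hp hη (φ := fun τ => φ (ξ, τ)) (by fun_prop),
    ← lintegral_indicator measurableSet_Ici]
  refine lintegral_congr fun τ => ?_
  rw [convDensity_of_ne_zero hξ]
  by_cases hτ : τ ∈ Ici (2 * ‖(2⁻¹ : ℝ) • ξ‖ ^ p)
  · rw [indicator_of_mem hτ, indicator_of_mem hτ]
  · rw [indicator_of_notMem hτ, indicator_of_notMem hτ, ENNReal.ofReal_zero, zero_mul]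

lemma lintegral_prod_weightedVolume (hp : 2 ≤ p) {φ : R3 → ℝ≥0∞} (hφ : Measurable φ) :
    ∫⁻ z, φ (pairSumMap p z) ∂((weightedVolume p).prod (weightedVolume p)) =
      ∫⁻ q, ENNReal.ofReal (convDensity p q) * φ q := by
  have hsum : Measurable fun z => φ (pairSumMap p z) :=
    hφ.comp (continuous_pairSumMap (by linarith)).measurable
  have hdensity : Measurable fun q => ENNReal.ofReal (convDensity p q) :=
    (measurable_convDensity hp).ennreal_ofReal
  have hweight : Measurable fun z : R2 × R2 =>
      ENNReal.ofReal (‖z.1‖ ^ ((p - 2) / 2)) * ENNReal.ofReal (‖z.2‖ ^ ((p - 2) / 2)) := by fun_prop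
  rw [prod_withDensity (by fun_prop) (by fun_prop),
    lintegral_withDensity_eq_lintegral_mul _ hweight hsum,
    lintegral_prod_eq_lintegral_midpoint _ (hweight.mul hsum), Measure.volume_eq_prod,
    lintegral_prod _ (by fun_prop)]
  refine lintegral_congr_ae ?_
  filter_upwards [Measure.ae_ne volume (0 : R2)] with ξ hξ
  exact (lintegral_convDensity_mul hp hξ hφ).symm

lemma mconv_eq_withDensity (hp : 2 ≤ p) :
    mconv (wProj (fun y => ‖y‖ ^ p) fun y => ‖y‖ ^ ((p - 2) / 2))
      (wProj (fun y => ‖y‖ ^ p) fun y => ‖y‖ ^ ((p - 2) / 2)) =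
      volume.withDensity fun q => ENNReal.ofReal (convDensity p q) := by
  rw [mconv_eq_map_pairSumMap]
  refine Measure.ext_of_lintegral _ fun φ hφ => ?_
  rw [lintegral_map hφ (continuous_pairSumMap (by linarith)).measurable,
    lintegral_prod_weightedVolume hp hφ,
    lintegral_withDensity_eq_lintegral_mul _ (measurable_convDensity hp).ennreal_ofReal hφ]
  rfl

lemma essSup_convDensity (hp : 2 ≤ p) :
    essSup (fun q => ENNReal.ofReal (convDensity p q)) volume = ENNReal.ofReal (π / p) := by
  refine le_antisymm (essSup_le_of_ae_le _ (ae_of_all _ fun q =>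
    ENNReal.ofReal_le_ofReal (convDensity_le hp q))) ?_
  have hcont : ContinuousAt (fun q => ENNReal.ofReal (convDensity p q)) (0, 1) :=
    ENNReal.continuous_ofReal.continuousAt.comp (continuousAt_convDensity_zero_left hp one_pos)
  have h := le_essSup_of_continuousAt volume hcont
  rwa [convDensity_zero_left hp one_pos] at h

end Convolution

end

theorem statement4 (p : ℝ) (hp : 2 ≤ p)
    (w : R2 → ℝ) (hw : w = fun y => ‖y‖ ^ ((p - 2) / 2))
    (wνp : Measure R3) (hwνp : wνp = wProj (fun y => ‖y‖ ^ p) w)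
    (Ep : Set R3) (hEp : Ep = {q : R3 | (2:ℝ) ^ (1 - p) * ‖q.1‖ ^ p ≤ q.2}) :
    -- (a) absolute continuity and essential boundedness
    (mconv wνp wνp ≪ volume ∧
      ∃ C : ℝ, ∀ᵐ x ∂volume, (mconv wνp wνp).rnDeriv volume x ≤ ENNReal.ofReal C) ∧
    -- (b) the topological support is `E_p`
    msupport (mconv wνp wνp) = Ep ∧
    -- (c) the case `p > 2`
    (2 < p →
      (∃ F : R3 → ℝ,
        (∀ᵐ x ∂volume, (mconv wνp wνp).rnDeriv volume x = ENNReal.ofReal (F x)) ∧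
        ContinuousOn F (Ep \ {(0 : R3)}) ∧
        (∀ ξ : R2, ξ ≠ 0 → F (ξ, (2:ℝ) ^ (1 - p) * ‖ξ‖ ^ p) =
          Real.pi / (p * Real.sqrt (p - 1))) ∧
        (∀ τ : ℝ, 0 < τ → F ((0 : R2), τ) = Real.pi / p) ∧
        (∀ q ∈ Ep, q.1 ≠ 0 → F q < Real.pi / p)) ∧
      essSup ((mconv wνp wνp).rnDeriv volume) volume = ENNReal.ofReal (Real.pi / p)) := by
  subst hw hwνp hEp
  have hconv := mconv_eq_withDensity hp
  have hderiv : (mconv _ _).rnDeriv volume =ᵐ[volume] fun q => ENNReal.ofReal (convDensity p q) :=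
    hconv ▸ Measure.rnDeriv_withDensity _ (measurable_convDensity hp).ennreal_ofReal
  refine ⟨⟨hconv ▸ withDensity_absolutelyContinuous _ _, Real.pi / p, ?_⟩, ?_, fun hp_lt =>
    ⟨⟨convDensity p, hderiv, continuousOn_convDensity hp, fun _ => convDensity_boundary hp,
      fun _ => convDensity_zero_left hp, fun _ _ => convDensity_lt hp_lt⟩, ?_⟩⟩
  · filter_upwards [hderiv] with q hq
    exact hq.trans_le (ENNReal.ofReal_le_ofReal (convDensity_le hp q))
  · rw [mconv_eq_map_pairSumMap, msupport_map_pairSumMap hp]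
    rfl
  · rw [essSup_congr_ae hderiv, essSup_convDensity hp]
end
end

section
/- Let φ : ℝ² → ℝ be a nonnegative, convex, twice continuously differentiable function, let ψ = |·|² + φ, and let σ be the projection measure on the graph of ψ. Then there exists a function F : ℝ³ → ℝ, equal Lebesgue-almost everywhere to the Radon–Nikodym derivative of σ ∗ σ with respect to Lebesgue measure, which is continuous on the set {(ξ, τ) ∈ ℝ² × ℝ : τ ≥ 2ψ(ξ/2)} and satisfies, for every ξ ∈ ℝ², F(ξ, 2ψ(ξ/2)) = π / √(det H(ψ)(ξ/2)), where H(ψ)(x) is the Hessian matrix of ψ at x. -/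
open MeasureTheory Filter
open scoped ENNReal

noncomputable section

/-- Projection measure on the graph of `Ψ`. -/
def proj (Ψ : R2 → ℝ) : Measure R3 :=
  Measure.map (fun y => (y, Ψ y)) volume

/-- Hessian matrix of `φ` at `y`. -/
def Hess (φ : R2 → ℝ) (y : R2) : Matrix (Fin 2) (Fin 2) ℝ :=
  Matrix.of fun i j =>
    iteratedFDeriv ℝ 2 φ y ![EuclideanSpace.single i 1, EuclideanSpace.single j 1]

/-!
For fixed `ξ`, the slice of `σ ∗ σ` over `ξ` is the image of Lebesgue measure under
`η ↦ f (x + η) + f (x - η)`, where `x = ξ / 2`. In polar coordinates `η = r • v` this function is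
convex and increases in `r` from `2 * f x` to `∞`. Its `r`-derivative is `r * raySlope f x v r`,
where `raySlope f x v r` is twice the average of the Hessian form in direction `v` over the segment
from `x - r • v` to `x + r • v`. The factor `r` cancels the Jacobian of polar coordinates, so the
density at `τ` is the integral over unit vectors `v` of `(raySlope f x v r)⁻¹`, where `r` is the
radius at which `τ` is attained. This is continuous up to the boundary `τ = 2 * f x`, where `r = 0`
and the integral equals `∫ (2 * hessForm f x v)⁻¹ dv = ∫ exp (-hessForm f x η) dη = π / √det`.
-/

section Hessian

variable {E : Type*} [NormedAddCommGroup E] [NormedSpace ℝ E] {f : E → ℝ}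

/-- The Hessian of `f` at `x` as a quadratic form: the second derivative evaluated at `(v, v)`. -/
def hessForm (f : E → ℝ) (x v : E) : ℝ :=
  fderiv ℝ (fderiv ℝ f) x v v

lemma continuous_hessForm (hf : ContDiff ℝ 2 f) :
    Continuous fun p : E × E => hessForm f p.1 p.2 := by
  have : Continuous (fderiv ℝ (fderiv ℝ f)) :=
    (hf.fderiv_right (m := 1) (by norm_num)).continuous_fderiv (by norm_num)
  unfold hessForm
  fun_prop

lemma hessForm_smul (f : E → ℝ) (x : E) (r : ℝ) (v : E) :
    hessForm f x (r • v) = r ^ 2 * hessForm f x v := by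
  simp only [hessForm, map_smul, smul_apply, smul_eq_mul]
  ring

lemma hessForm_add {g : E → ℝ} (hf : ContDiff ℝ 2 f) (hg : ContDiff ℝ 2 g) (x v : E) :
    hessForm (fun y => f y + g y) x v = hessForm f x v + hessForm g x v := by
  have hdf : Differentiable ℝ f := hf.differentiable (by norm_num)
  have hdg : Differentiable ℝ g := hg.differentiable (by norm_num)
  have hdf' : Differentiable ℝ (fderiv ℝ f) :=
    (hf.fderiv_right (m := 1) (by norm_num)).differentiable (by norm_num)
  have hdg' : Differentiable ℝ (fderiv ℝ g) :=
    (hg.fderiv_right (m := 1) (by norm_num)).differentiable (by norm_num)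
  have hfderiv : fderiv ℝ (fun y => f y + g y) = fun y => fderiv ℝ f y + fderiv ℝ g y :=
    funext fun y => fderiv_fun_add (hdf y) (hdg y)
  rw [hessForm, hfderiv, fderiv_fun_add (hdf' x) (hdg' x)]
  rfl

lemma hessForm_norm_sq {V : Type*} [NormedAddCommGroup V] [InnerProductSpace ℝ V] (x v : V) :
    hessForm (fun y : V => ‖y‖ ^ 2) x v = 2 * ‖v‖ ^ 2 := by
  have hfderiv : fderiv ℝ (fun y : V => ‖y‖ ^ 2) = ⇑(2 • innerSL ℝ : V →L[ℝ] V →L[ℝ] ℝ) := by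
    ext1 y
    simp [fderiv_norm_sq_apply]
  rw [hessForm, hfderiv, ContinuousLinearMap.fderiv, two_smul, two_mul,
    ← real_inner_self_eq_norm_sq]
  rfl

lemma hasDerivAt_comp_ray (hf : Differentiable ℝ f) (x v : E) (r : ℝ) :
    HasDerivAt (fun t : ℝ => f (x + t • v)) (fderiv ℝ f (x + r • v) v) r :=
  (hf _).hasFDerivAt.comp_hasDerivAt r
    (by simpa using ((hasDerivAt_id r).smul_const v).const_add x)

lemma hasDerivAt_fderiv_comp_ray (hf : ContDiff ℝ 2 f) (x v : E) (r : ℝ) :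
    HasDerivAt (fun t : ℝ => fderiv ℝ f (x + t • v) v) (hessForm f (x + r • v) v) r := by
  have hdf : Differentiable ℝ (fderiv ℝ f) :=
    (hf.fderiv_right (m := 1) (by norm_num)).differentiable (by norm_num)
  have hray : HasDerivAt (fun t : ℝ => x + t • v) v r := by
    simpa using ((hasDerivAt_id r).smul_const v).const_add x
  simpa [hessForm] using
    ((hdf _).hasFDerivAt.comp_hasDerivAt r hray).clm_apply (hasDerivAt_const r v)

lemma hessForm_nonneg_of_convexOn (hconv : ConvexOn ℝ Set.univ f) (hf : ContDiff ℝ 2 f)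
    (x v : E) : 0 ≤ hessForm f x v := by
  have hray : ConvexOn ℝ Set.univ fun r : ℝ => f (x + r • v) := by
    simpa [Function.comp_def, AffineMap.lineMap_apply, add_comm] using
      hconv.comp_affineMap (AffineMap.lineMap x (x + v) : ℝ →ᵃ[ℝ] E)
  have hderiv := hasDerivAt_comp_ray (hf.differentiable (by norm_num)) x v
  have hderiv_eq : deriv (fun r : ℝ => f (x + r • v)) = fun r => fderiv ℝ f (x + r • v) v :=
    funext fun r => (hderiv r).deriv
  have hmono : Monotone fun r : ℝ => fderiv ℝ f (x + r • v) v := by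
    simpa only [monotoneOn_univ, hderiv_eq] using
      hray.monotoneOn_deriv fun r _ => (hderiv r).differentiableAt
  simpa [(hasDerivAt_fderiv_comp_ray hf x v 0).deriv] using hmono.deriv_nonneg (x := 0)

end Hessian

section RaySum

variable {E : Type*} [NormedAddCommGroup E] [NormedSpace ℝ E] {f : E → ℝ}

/-- The sum of the values of `f` at the two points at parameter distance `r` from `x` on the line
through `x` with direction `v`. -/
def raySum (f : E → ℝ) (x v : E) (r : ℝ) : ℝ :=
  f (x + r • v) + f (x - r • v)

/-- The derivative of `raySum f x v` at `r` divided by `r`, written as an integral in order to be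
meaningful at `r = 0`. -/
def raySlope (f : E → ℝ) (x v : E) (r : ℝ) : ℝ :=
  ∫ s in (-1 : ℝ)..1, hessForm f (x + (r * s) • v) v

lemma raySum_zero (f : E → ℝ) (x v : E) : raySum f x v 0 = 2 * f x := by
  simp [raySum, two_mul]

lemma raySlope_zero (f : E → ℝ) (x v : E) : raySlope f x v 0 = 2 * hessForm f x v := by
  simp only [raySlope, zero_mul, zero_smul, add_zero, intervalIntegral.integral_const, smul_eq_mul]
  norm_num

lemma continuous_raySlope (hf : ContDiff ℝ 2 f) :
    Continuous fun p : E × E × ℝ => raySlope f p.1 p.2.1 p.2.2 := by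
  refine intervalIntegral.continuous_parametric_intervalIntegral_of_continuous' ?_ _ _
  exact (continuous_hessForm hf).comp (f := fun q : (E × E × ℝ) × ℝ =>
    (q.1.1 + (q.1.2.2 * q.2) • q.1.2.1, q.1.2.1)) (by fun_prop)

lemma mul_raySlope (hf : ContDiff ℝ 2 f) (x v : E) (r : ℝ) :
    r * raySlope f x v r = fderiv ℝ f (x + r • v) v - fderiv ℝ f (x - r • v) v := by
  have hcont := continuous_hessForm hf
  have hderiv (s : ℝ) : HasDerivAt (fun s : ℝ => fderiv ℝ f (x + (r * s) • v) v)
      (hessForm f (x + (r * s) • v) v * r) s :=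
    (hasDerivAt_fderiv_comp_ray hf x v (r * s)).comp s
      (by simpa using (hasDerivAt_id s).const_mul r)
  have hftc := intervalIntegral.integral_eq_sub_of_hasDerivAt (a := -1) (b := 1)
    (fun s _ => hderiv s) (Continuous.intervalIntegrable (by fun_prop) _ _)
  rw [intervalIntegral.integral_mul_const] at hftc
  rw [mul_comm, raySlope, hftc]
  simp [sub_eq_add_neg]

lemma hasDerivAt_raySum (hf : ContDiff ℝ 2 f) (x v : E) (r : ℝ) :
    HasDerivAt (raySum f x v) (r * raySlope f x v r) r := by
  have hdf : Differentiable ℝ f := hf.differentiable (by norm_num)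
  have hsum : raySum f x v = (fun t => f (x + t • v)) + fun t => f (x + t • -v) := by
    funext t
    simp [raySum, sub_eq_add_neg]
  rw [hsum, mul_raySlope hf]
  exact ((hasDerivAt_comp_ray hdf x v r).add (hasDerivAt_comp_ray hdf x (-v) r)).congr_deriv
    (by simp [sub_eq_add_neg])

lemma convexOn_comp_ray (hf : ContDiff ℝ 2 f) {v : E} (hv : ∀ y, 0 ≤ hessForm f y v) (x : E) :
    ConvexOn ℝ Set.univ fun r : ℝ => f (x + r • v) := by
  have hderiv := hasDerivAt_comp_ray (hf.differentiable (by norm_num)) x v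
  refine convexOn_of_hasDerivWithinAt2_nonneg convex_univ
    (fun r _ => (hderiv r).continuousAt.continuousWithinAt)
    (fun r _ => (hderiv r).hasDerivWithinAt)
    (fun r _ => (hasDerivAt_fderiv_comp_ray hf x v r).hasDerivWithinAt) fun r _ => hv _

lemma convexOn_raySum (hf : ContDiff ℝ 2 f) {v : E} (hv : ∀ y, 0 ≤ hessForm f y v) (x : E) :
    ConvexOn ℝ Set.univ (raySum f x v) := by
  have hneg (y : E) : 0 ≤ hessForm f y (-v) := by simpa [hessForm] using hv y
  refine ((convexOn_comp_ray hf hv x).add (convexOn_comp_ray hf hneg x)).congr fun r _ => ?_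
  simp [raySum, sub_eq_add_neg]

lemma raySlope_pos (hf : ContDiff ℝ 2 f) {v : E} (hv : ∀ y, 0 < hessForm f y v) (x : E) (r : ℝ) :
    0 < raySlope f x v r := by
  have hcont := continuous_hessForm hf
  exact intervalIntegral.intervalIntegral_pos_of_pos
    (Continuous.intervalIntegrable (by fun_prop) _ _) (fun s => hv _) (by norm_num)

lemma strictMonoOn_raySum (hf : ContDiff ℝ 2 f) {v : E} (hv : ∀ y, 0 < hessForm f y v) (x : E) :
    StrictMonoOn (raySum f x v) (Set.Ici 0) := by
  have hderiv := hasDerivAt_raySum hf x v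
  refine strictMonoOn_of_deriv_pos (convex_Ici 0)
    (fun r _ => (hderiv r).continuousAt.continuousWithinAt) fun r hr => ?_
  rw [interior_Ici] at hr
  rw [(hderiv r).deriv]
  exact mul_pos hr (raySlope_pos hf hv x r)

lemma tendsto_atTop_of_convexOn_of_lt {g : ℝ → ℝ} (hg : ConvexOn ℝ Set.univ g) {a b : ℝ}
    (hab : a < b) (hlt : g a < g b) : Tendsto g atTop atTop := by
  set m := (g b - g a) / (b - a)
  have hm : 0 < m := div_pos (sub_pos.2 hlt) (sub_pos.2 hab)
  have hline : Tendsto (fun y => m * (y - a) + g a) atTop atTop :=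
    tendsto_atTop_add_const_right _ _
      ((tendsto_atTop_add_const_right _ (-a) tendsto_id).const_mul_atTop hm)
  refine tendsto_atTop_mono' atTop ?_ hline
  filter_upwards [eventually_ge_atTop b] with y hy
  have hay : a < y := hab.trans_le hy
  have hsecant : m ≤ (g y - g a) / (y - a) :=
    hg.secant_mono trivial trivial trivial hab.ne' hay.ne' hy
  linarith [(le_div_iff₀ (sub_pos.2 hay)).1 hsecant]

lemma bijOn_raySum (hf : ContDiff ℝ 2 f) {v : E} (hv : ∀ y, 0 < hessForm f y v) (x : E) :
    Set.BijOn (raySum f x v) (Set.Ici 0) (Set.Ici (2 * f x)) := by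
  have hmono := strictMonoOn_raySum hf hv x
  rw [← raySum_zero f x v]
  refine ⟨fun r hr => hmono.monotoneOn Set.self_mem_Ici hr hr, hmono.injOn, ?_⟩
  refine intermediate_value_Ici
    (fun r _ => (hasDerivAt_raySum hf x v r).continuousAt.continuousWithinAt) ?_
  exact tendsto_atTop_of_convexOn_of_lt (convexOn_raySum hf (fun y => (hv y).le) x) one_pos
    (hmono Set.self_mem_Ici (Set.mem_Ici.2 zero_le_one) one_pos)

lemma image_raySum_Ioi (hf : ContDiff ℝ 2 f) {v : E} (hv : ∀ y, 0 < hessForm f y v) (x : E) :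
    raySum f x v '' Set.Ioi 0 = Set.Ioi (2 * f x) := by
  have hbij := bijOn_raySum hf hv x
  rw [← Set.Ici_sdiff_left, hbij.injOn.image_sdiff_subset (by simp), hbij.image_eq,
    Set.image_singleton, raySum_zero, Set.Ici_sdiff_left]

end RaySum

section RayRadius

lemma continuous_of_strictMonoOn_apply_eq {X α β : Type*} [TopologicalSpace X]
    [LinearOrder α] [TopologicalSpace α] [OrderTopology α]
    [LinearOrder β] [TopologicalSpace β] [OrderClosedTopology β]
    {g : X → α → β} {ρ : X → α} {τ : X → β} {a : α} (hg : ∀ r, Continuous fun x => g x r)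
    (hmono : ∀ x, StrictMonoOn (g x) (Set.Ici a)) (hτ : Continuous τ) (hρ : ∀ x, a ≤ ρ x)
    (hgρ : ∀ x, g x (ρ x) = τ x) : Continuous ρ := by
  have hlt_left (x : X) {r : α} (hr : a ≤ r) : g x r < τ x ↔ r < ρ x := by
    rw [← hgρ x, (hmono x).lt_iff_lt hr (hρ x)]
  have hlt_right (x : X) {r : α} (hr : a ≤ r) : τ x < g x r ↔ ρ x < r := by
    rw [← hgρ x, (hmono x).lt_iff_lt (hρ x) hr]
  refine continuous_iff_continuousAt.2 fun x₀ => tendsto_order.2 ⟨fun r hr => ?_, fun r hr => ?_⟩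
  · rcases lt_or_ge r a with hra | har
    · exact Eventually.of_forall fun x => hra.trans_le (hρ x)
    · filter_upwards [(hg r).continuousAt.eventually_lt hτ.continuousAt
        ((hlt_left x₀ har).2 hr)] with x hx
      exact (hlt_left x har).1 hx
  · have har : a ≤ r := (hρ x₀).trans hr.le
    filter_upwards [hτ.continuousAt.eventually_lt (hg r).continuousAt
      ((hlt_right x₀ har).2 hr)] with x hx
    exact (hlt_right x har).1 hx

variable {E : Type*} [NormedAddCommGroup E] [NormedSpace ℝ E] {f : E → ℝ}

/-- The radius at which `raySum f x v` attains the value `τ`. Values below the minimum `2 * f x` are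
first raised to it, which makes the radius depend continuously on `τ` in all of `ℝ`. -/
def rayRadius (f : E → ℝ) (x v : E) (τ : ℝ) : ℝ :=
  Function.invFunOn (raySum f x v) (Set.Ici 0) (max τ (2 * f x))

lemma rayRadius_nonneg (hf : ContDiff ℝ 2 f) {v : E} (hv : ∀ y, 0 < hessForm f y v) (x : E)
    (τ : ℝ) : 0 ≤ rayRadius f x v τ :=
  (bijOn_raySum hf hv x).surjOn.mapsTo_invFunOn (le_max_right τ (2 * f x))

lemma raySum_rayRadius (hf : ContDiff ℝ 2 f) {v : E} (hv : ∀ y, 0 < hessForm f y v) (x : E)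
    (τ : ℝ) : raySum f x v (rayRadius f x v τ) = max τ (2 * f x) :=
  (bijOn_raySum hf hv x).invOn_invFunOn.2 (le_max_right τ (2 * f x))

lemma rayRadius_raySum (hf : ContDiff ℝ 2 f) {v : E} (hv : ∀ y, 0 < hessForm f y v) (x : E)
    {r : ℝ} (hr : 0 ≤ r) : rayRadius f x v (raySum f x v r) = r := by
  have hbij := bijOn_raySum hf hv x
  rw [rayRadius, max_eq_left (hbij.mapsTo hr), hbij.invOn_invFunOn.1 hr]

lemma rayRadius_two_mul (hf : ContDiff ℝ 2 f) {v : E} (hv : ∀ y, 0 < hessForm f y v) (x : E) :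
    rayRadius f x v (2 * f x) = 0 := by
  rw [← raySum_zero f x v, rayRadius_raySum hf hv x le_rfl]

lemma continuous_rayRadius (hf : ContDiff ℝ 2 f) (hpos : ∀ x v, v ≠ 0 → 0 < hessForm f x v)
    {X : Type*} [TopologicalSpace X] {x v : X → E} {τ : X → ℝ} (hx : Continuous x)
    (hv : Continuous v) (hv0 : ∀ p, v p ≠ 0) (hτ : Continuous τ) :
    Continuous fun p => rayRadius f (x p) (v p) (τ p) := by
  have hposv (p : X) (y : E) : 0 < hessForm f y (v p) := hpos y (v p) (hv0 p)
  refine continuous_of_strictMonoOn_apply_eq (g := fun p => raySum f (x p) (v p))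
    (τ := fun p => max (τ p) (2 * f (x p))) (fun r => ?_)
    (fun p => strictMonoOn_raySum hf (hposv p) (x p)) (by fun_prop)
    (fun p => rayRadius_nonneg hf (hposv p) (x p) (τ p))
    fun p => raySum_rayRadius hf (hposv p) (x p) (τ p)
  unfold raySum
  fun_prop

/-- The density at `τ` of the image of the measure `r dr` on `(0, ∞)` under `raySum f x v`, for
`τ > 2 * f x`. -/
def rayDensity (f : E → ℝ) (x v : E) (τ : ℝ) : ℝ :=
  (raySlope f x v (rayRadius f x v τ))⁻¹

lemma rayDensity_pos (hf : ContDiff ℝ 2 f) {v : E} (hv : ∀ y, 0 < hessForm f y v) (x : E)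
    (τ : ℝ) : 0 < rayDensity f x v τ :=
  inv_pos.2 (raySlope_pos hf hv x _)

lemma rayDensity_two_mul (hf : ContDiff ℝ 2 f) {v : E} (hv : ∀ y, 0 < hessForm f y v) (x : E) :
    rayDensity f x v (2 * f x) = (2 * hessForm f x v)⁻¹ := by
  rw [rayDensity, rayRadius_two_mul hf hv, raySlope_zero]

lemma continuous_rayDensity (hf : ContDiff ℝ 2 f) (hpos : ∀ x v, v ≠ 0 → 0 < hessForm f x v)
    {X : Type*} [TopologicalSpace X] {x v : X → E} {τ : X → ℝ} (hx : Continuous x)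
    (hv : Continuous v) (hv0 : ∀ p, v p ≠ 0) (hτ : Continuous τ) :
    Continuous fun p => rayDensity f (x p) (v p) (τ p) :=
  ((continuous_raySlope hf).comp
    (hx.prodMk (hv.prodMk (continuous_rayRadius hf hpos hx hv hv0 hτ)))).inv₀
    fun p => (raySlope_pos hf (fun y => hpos y (v p) (hv0 p)) _ _).ne'

lemma lintegral_Ioi_mul_comp_raySum (hf : ContDiff ℝ 2 f) {v : E} (hv : ∀ y, 0 < hessForm f y v)
    (x : E) (G : ℝ → ℝ≥0∞) :
    ∫⁻ r in Set.Ioi 0, ENNReal.ofReal r * G (raySum f x v r) =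
      ∫⁻ t in Set.Ioi (2 * f x), ENNReal.ofReal (rayDensity f x v t) * G t := by
  have hmono : StrictMonoOn (raySum f x v) (Set.Ioi 0) :=
    (strictMonoOn_raySum hf hv x).mono Set.Ioi_subset_Ici_self
  rw [← image_raySum_Ioi hf hv x, lintegral_image_eq_lintegral_deriv_mul_of_monotoneOn
    measurableSet_Ioi (fun r _ => (hasDerivAt_raySum hf x v r).hasDerivWithinAt) hmono.monotoneOn]
  refine setLIntegral_congr_fun measurableSet_Ioi fun r (hr : 0 < r) => ?_
  have hslope := raySlope_pos hf hv x r
  simp only [rayDensity, rayRadius_raySum hf hv x hr.le]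
  rw [← mul_assoc, ← ENNReal.ofReal_mul (mul_pos hr hslope).le, mul_inv_cancel_right₀ hslope.ne']

end RayRadius

section Polar

/-- The unit vector with polar angle `θ`. -/
def dir (θ : ℝ) : R2 := !₂[Real.cos θ, Real.sin θ]

lemma norm_dir (θ : ℝ) : ‖dir θ‖ = 1 := by
  simp [dir, EuclideanSpace.norm_eq]

lemma dir_ne_zero (θ : ℝ) : dir θ ≠ 0 :=
  norm_ne_zero_iff.1 ((norm_dir θ).trans_ne one_ne_zero)

lemma continuous_dir : Continuous dir := by
  unfold dir
  fun_prop

lemma lintegral_eq_lintegral_polar {g : R2 → ℝ≥0∞} (hg : Measurable g) :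
    ∫⁻ η, g η = ∫⁻ θ in Set.Ioo (-Real.pi) Real.pi, ∫⁻ r in Set.Ioi (0 : ℝ),
      ENNReal.ofReal r * g (r • dir θ) := by
  have hmp : MeasurePreserving
      (fun p : ℝ × ℝ => WithLp.toLp 2 (MeasurableEquiv.finTwoArrow.symm p) : ℝ × ℝ → R2)
      volume volume :=
    (PiLp.volume_preserving_toLp (Fin 2)).comp
      ((volume_preserving_finTwoArrow ℝ).symm MeasurableEquiv.finTwoArrow)
  have hdir : Measurable dir := continuous_dir.measurable
  have hpolar (p : ℝ × ℝ) :
      WithLp.toLp 2 (MeasurableEquiv.finTwoArrow.symm (polarCoord.symm p)) = p.1 • dir p.2 := by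
    ext i
    fin_cases i <;> simp [dir, MeasurableEquiv.finTwoArrow, polarCoord]
  rw [← hmp.lintegral_comp hg, ← lintegral_comp_polarCoord_symm]
  simp_rw [hpolar, smul_eq_mul]
  rw [polarCoord_target, Measure.volume_eq_prod, ← Measure.prod_restrict, lintegral_prod_symm]
  exact Measurable.aemeasurable (by fun_prop)

lemma ofReal_intervalIntegral_eq_lintegral_Ioo {g : ℝ → ℝ} {a b : ℝ} (hab : a ≤ b)
    (hg : IntervalIntegrable g volume a b) (hg0 : ∀ t, 0 ≤ g t) :
    ENNReal.ofReal (∫ t in a..b, g t) = ∫⁻ t in Set.Ioo a b, ENNReal.ofReal (g t) := by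
  rw [intervalIntegral.integral_of_le hab, integral_Ioc_eq_integral_Ioo,
    ofReal_integral_eq_lintegral_ofReal
      (((intervalIntegrable_iff_integrableOn_Ioo_of_le hab).1 hg)) (Eventually.of_forall hg0)]

end Polar

section Gaussian

open scoped MatrixOrder in
lemma dotProduct_mulVec_eq_norm_sqrt_sq {ι : Type*} [Fintype ι] [DecidableEq ι]
    {A : Matrix ι ι ℝ} (hA : A.PosSemidef) (v : EuclideanSpace ℝ ι) :
    v.ofLp ⬝ᵥ A.mulVec v.ofLp = ‖(CFC.sqrt A).toEuclideanLin v‖ ^ 2 := by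
  have hsymm : (CFC.sqrt A).transpose = CFC.sqrt A := by
    simpa using (Matrix.nonneg_iff_posSemidef.1 (CFC.sqrt_nonneg A)).isHermitian.eq
  have hSS : (CFC.sqrt A).transpose * CFC.sqrt A = A := by
    rw [hsymm, CFC.sqrt_mul_sqrt_self A hA.nonneg]
  conv_lhs => rw [← hSS]
  rw [EuclideanSpace.real_norm_sq_eq, ← Matrix.mulVec_mulVec, Matrix.dotProduct_mulVec,
    Matrix.vecMul_transpose]
  simp [dotProduct, sq]

lemma lintegral_exp_neg_norm_sq {V : Type*} [NormedAddCommGroup V] [InnerProductSpace ℝ V]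
    [FiniteDimensional ℝ V] [MeasurableSpace V] [BorelSpace V] :
    ∫⁻ v : V, ENNReal.ofReal (Real.exp (-‖v‖ ^ 2)) =
      ENNReal.ofReal (Real.pi ^ (Module.finrank ℝ V / 2 : ℝ)) := by
  have hgauss := GaussianFourier.integral_rexp_neg_mul_sq_norm (V := V) one_pos
  simp only [neg_mul, one_mul, div_one] at hgauss
  have hint : Integrable fun v : V => Real.exp (-‖v‖ ^ 2) :=
    Integrable.of_integral_ne_zero (hgauss.trans_ne (by positivity))
  rw [← hgauss, ofReal_integral_eq_lintegral_ofReal hint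
    (Eventually.of_forall fun v => (Real.exp_pos _).le)]

open scoped MatrixOrder in
lemma lintegral_exp_neg_dotProduct_mulVec {ι : Type*} [Fintype ι] [DecidableEq ι]
    {A : Matrix ι ι ℝ} (hA : A.PosDef) :
    ∫⁻ v : EuclideanSpace ℝ ι, ENNReal.ofReal (Real.exp (-(v.ofLp ⬝ᵥ A.mulVec v.ofLp))) =
      ENNReal.ofReal (Real.pi ^ (Fintype.card ι / 2 : ℝ) / √A.det) := by
  set L := (CFC.sqrt A).toEuclideanLin with hL
  have hdet : LinearMap.det L = √A.det := by
    rw [hL, LinearMap.det_toLpLin, hA.posSemidef.det_sqrt]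
    simp
  have hdet_pos : 0 < LinearMap.det L := hdet ▸ Real.sqrt_pos.2 hA.det_pos
  have hLm : Measurable L := L.continuous_of_finiteDimensional.measurable
  calc ∫⁻ v : EuclideanSpace ℝ ι, ENNReal.ofReal (Real.exp (-(v.ofLp ⬝ᵥ A.mulVec v.ofLp)))
      = ∫⁻ w, ENNReal.ofReal (Real.exp (-‖w‖ ^ 2)) ∂(volume.map L) := by
        rw [lintegral_map (by fun_prop) hLm]
        simp_rw [dotProduct_mulVec_eq_norm_sqrt_sq hA.posSemidef, hL]
    _ = ENNReal.ofReal (√A.det)⁻¹ * ENNReal.ofReal (Real.pi ^ (Fintype.card ι / 2 : ℝ)) := by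
        rw [Measure.map_linearMap_addHaar_eq_smul_addHaar _ hdet_pos.ne', lintegral_smul_measure,
          abs_of_pos (inv_pos.2 hdet_pos), hdet, lintegral_exp_neg_norm_sq, finrank_euclideanSpace,
          smul_eq_mul]
    _ = ENNReal.ofReal (Real.pi ^ (Fintype.card ι / 2 : ℝ) / √A.det) := by
        rw [← ENNReal.ofReal_mul (by positivity), inv_mul_eq_div]

lemma lintegral_Ioi_mul_exp_neg_mul_sq {b : ℝ} (hb : 0 < b) :
    ∫⁻ r in Set.Ioi (0 : ℝ), ENNReal.ofReal r * ENNReal.ofReal (Real.exp (-(r ^ 2 * b))) =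
      ENNReal.ofReal (2 * b)⁻¹ := by
  have hint : ∫ r in Set.Ioi (0 : ℝ), r * Real.exp (-b * r ^ 2) = (2 * b)⁻¹ := by
    have := integral_rpow_mul_exp_neg_mul_rpow (p := 2) (q := 1) two_pos (by norm_num) hb
    norm_num [Real.rpow_neg_one] at this
    simpa [mul_comm] using this
  rw [← hint, ofReal_integral_eq_lintegral_ofReal (integrable_mul_exp_neg_mul_sq hb).integrableOn
    (ae_restrict_of_forall_mem measurableSet_Ioi fun r (hr : 0 < r) => by positivity)]
  refine setLIntegral_congr_fun measurableSet_Ioi fun r (hr : 0 < r) => ?_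
  simp only [← ENNReal.ofReal_mul hr.le, neg_mul, mul_comm b]

lemma lintegral_exp_neg_of_homogeneous {Q : R2 → ℝ} (hQ : Measurable Q)
    (hsmul : ∀ (r : ℝ) v, Q (r • v) = r ^ 2 * Q v) (hpos : ∀ v ≠ 0, 0 < Q v) :
    ∫⁻ v, ENNReal.ofReal (Real.exp (-Q v)) =
      ∫⁻ θ in Set.Ioo (-Real.pi) Real.pi, ENNReal.ofReal (2 * Q (dir θ))⁻¹ := by
  rw [lintegral_eq_lintegral_polar (by fun_prop)]
  simp_rw [hsmul, lintegral_Ioi_mul_exp_neg_mul_sq (hpos _ (dir_ne_zero _))]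

end Gaussian

section Hess

variable {f : R2 → ℝ}

lemma hessForm_eq_dotProduct_mulVec (f : R2 → ℝ) (x v : R2) :
    hessForm f x v = v.ofLp ⬝ᵥ (Hess f x).mulVec v.ofLp := by
  have hv : v = v 0 • EuclideanSpace.single 0 (1 : ℝ) + v 1 • EuclideanSpace.single 1 (1 : ℝ) := by
    ext i
    fin_cases i <;> simp
  conv_lhs => rw [hv]
  simp only [hessForm, map_add, map_smul, add_apply, smul_apply, smul_eq_mul, Hess, dotProduct,
    Matrix.mulVec, Fin.sum_univ_two, Matrix.of_apply, iteratedFDeriv_two_apply,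
    Matrix.cons_val_zero, Matrix.cons_val_one]
  ring

lemma isHermitian_Hess (hf : ContDiff ℝ 2 f) (x : R2) : (Hess f x).IsHermitian := by
  ext i j
  simpa [Hess, iteratedFDeriv_two_apply] using
    (hf.contDiffAt (x := x)).isSymmSndFDerivAt (by simp) (EuclideanSpace.single j 1)
      (EuclideanSpace.single i 1)

lemma posDef_Hess_iff (hf : ContDiff ℝ 2 f) (x : R2) :
    (Hess f x).PosDef ↔ ∀ v, v ≠ 0 → 0 < hessForm f x v := by
  simp only [Matrix.posDef_iff_dotProduct_mulVec, isHermitian_Hess hf x, true_and, star_trivial,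
    hessForm_eq_dotProduct_mulVec]
  exact ⟨fun h v hv => h (by simpa using hv), fun h v hv => h (WithLp.toLp 2 v) (by simpa using hv)⟩

lemma posDef_Hess_norm_sq_add {φ : R2 → ℝ} (hconv : ConvexOn ℝ Set.univ φ)
    (hφ : ContDiff ℝ 2 φ) (x : R2) : (Hess (fun y => ‖y‖ ^ 2 + φ y) x).PosDef := by
  refine (posDef_Hess_iff ((contDiff_norm_sq ℝ).add hφ) x).2 fun v hv => ?_
  rw [hessForm_add (contDiff_norm_sq ℝ) hφ, hessForm_norm_sq]
  exact add_pos_of_pos_of_nonneg (by positivity) (hessForm_nonneg_of_convexOn hconv hφ x v)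

lemma integral_inv_two_mul_hessForm_dir (hf : ContDiff ℝ 2 f) {x : R2} (hx : (Hess f x).PosDef) :
    ∫ θ in (-Real.pi)..Real.pi, (2 * hessForm f x (dir θ))⁻¹ = Real.pi / √(Hess f x).det := by
  have hpos := (posDef_Hess_iff hf x).1 hx
  have hcont : Continuous (hessForm f x) :=
    (continuous_hessForm hf).comp (f := fun v => (x, v)) (by fun_prop)
  have hinv_pos (θ : ℝ) : 0 < (2 * hessForm f x (dir θ))⁻¹ :=
    inv_pos.2 (mul_pos two_pos (hpos _ (dir_ne_zero θ)))
  have hinv_cont : Continuous fun θ => (2 * hessForm f x (dir θ))⁻¹ :=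
    ((hcont.comp continuous_dir).const_mul 2).inv₀ fun θ => (inv_pos.1 (hinv_pos θ)).ne'
  have hle : -Real.pi ≤ Real.pi := by linarith [Real.pi_pos]
  rw [← ENNReal.ofReal_eq_ofReal_iff (intervalIntegral.integral_nonneg hle
      fun θ _ => (hinv_pos θ).le) (by positivity)]
  calc ENNReal.ofReal (∫ θ in (-Real.pi)..Real.pi, (2 * hessForm f x (dir θ))⁻¹)
      = ∫⁻ θ in Set.Ioo (-Real.pi) Real.pi, ENNReal.ofReal (2 * hessForm f x (dir θ))⁻¹ :=
        ofReal_intervalIntegral_eq_lintegral_Ioo hle (hinv_cont.intervalIntegrable _ _)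
          fun θ => (hinv_pos θ).le
    _ = ∫⁻ v, ENNReal.ofReal (Real.exp (-hessForm f x v)) :=
        (lintegral_exp_neg_of_homogeneous hcont.measurable (hessForm_smul f x) hpos).symm
    _ = ENNReal.ofReal (Real.pi / √(Hess f x).det) := by
        simp_rw [hessForm_eq_dotProduct_mulVec, lintegral_exp_neg_dotProduct_mulVec hx]
        simp

end Hess

section Convolution

variable {f : R2 → ℝ}

/-- The density at `τ` of the image of Lebesgue measure under `η ↦ f (x + η) + f (x - η)`, for
`τ > 2 * f x`. -/
def symmSumDensity (f : R2 → ℝ) (x : R2) (τ : ℝ) : ℝ :=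
  ∫ θ in (-Real.pi)..Real.pi, rayDensity f x (dir θ) τ

lemma symmSumDensity_two_mul (hf : ContDiff ℝ 2 f) (hpos : ∀ x v, v ≠ 0 → 0 < hessForm f x v)
    (x : R2) : symmSumDensity f x (2 * f x) = Real.pi / √(Hess f x).det := by
  rw [← integral_inv_two_mul_hessForm_dir hf ((posDef_Hess_iff hf x).2 (hpos x))]
  exact intervalIntegral.integral_congr fun θ _ =>
    rayDensity_two_mul hf (fun y => hpos y _ (dir_ne_zero θ)) x

lemma continuous_symmSumDensity (hf : ContDiff ℝ 2 f)
    (hpos : ∀ x v, v ≠ 0 → 0 < hessForm f x v) :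
    Continuous fun p : R2 × ℝ => symmSumDensity f p.1 p.2 :=
  intervalIntegral.continuous_parametric_intervalIntegral_of_continuous'
    (continuous_rayDensity hf hpos (x := fun q : R3 × ℝ => q.1.1) (by fun_prop)
      (continuous_dir.comp continuous_snd) (fun _ => dir_ne_zero _) (by fun_prop)) _ _

lemma lintegral_comp_symmSum (hf : ContDiff ℝ 2 f) (hpos : ∀ x v, v ≠ 0 → 0 < hessForm f x v)
    (x : R2) {G : ℝ → ℝ≥0∞} (hG : Measurable G) :
    ∫⁻ η, G (f (x + η) + f (x - η)) =
      ∫⁻ t in Set.Ioi (2 * f x), ENNReal.ofReal (symmSumDensity f x t) * G t := by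
  have hfc : Continuous f := hf.continuous
  have hdir (θ : ℝ) (y : R2) : 0 < hessForm f y (dir θ) := hpos y _ (dir_ne_zero θ)
  have hdensity : Continuous fun p : ℝ × ℝ => rayDensity f x (dir p.1) p.2 :=
    continuous_rayDensity hf hpos continuous_const (continuous_dir.comp continuous_fst)
      (fun _ => dir_ne_zero _) continuous_snd
  calc ∫⁻ η, G (f (x + η) + f (x - η))
      = ∫⁻ θ in Set.Ioo (-Real.pi) Real.pi, ∫⁻ r in Set.Ioi (0 : ℝ),
          ENNReal.ofReal r * G (raySum f x (dir θ) r) := by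
        rw [lintegral_eq_lintegral_polar (by fun_prop)]
        rfl
    _ = ∫⁻ θ in Set.Ioo (-Real.pi) Real.pi, ∫⁻ t in Set.Ioi (2 * f x),
          ENNReal.ofReal (rayDensity f x (dir θ) t) * G t := by
        simp_rw [lintegral_Ioi_mul_comp_raySum hf (hdir _)]
    _ = ∫⁻ t in Set.Ioi (2 * f x), ∫⁻ θ in Set.Ioo (-Real.pi) Real.pi,
          ENNReal.ofReal (rayDensity f x (dir θ) t) * G t :=
        lintegral_lintegral_swap
          (hdensity.measurable.ennreal_ofReal.mul (hG.comp measurable_snd)).aemeasurable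
    _ = ∫⁻ t in Set.Ioi (2 * f x), ENNReal.ofReal (symmSumDensity f x t) * G t := by
        refine lintegral_congr fun t => ?_
        have hslice : Continuous fun θ => rayDensity f x (dir θ) t :=
          hdensity.comp (f := fun θ => (θ, t)) (by fun_prop)
        rw [lintegral_mul_const _ hslice.measurable.ennreal_ofReal, symmSumDensity,
          ofReal_intervalIntegral_eq_lintegral_Ioo (by linarith [Real.pi_pos])
            (hslice.intervalIntegrable _ _) fun θ => (rayDensity_pos hf (hdir θ) x t).le]

lemma lintegral_mconv_proj {f g : R2 → ℝ} (hf : Measurable f) (hg : Measurable g)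
    {h : R3 → ℝ≥0∞} (hh : Measurable h) :
    ∫⁻ q, h q ∂mconv (proj f) (proj g) =
      ∫⁻ ξ, ∫⁻ η, h (ξ, f ((2 : ℝ)⁻¹ • ξ + η) + g ((2 : ℝ)⁻¹ • ξ - η)) := by
  unfold mconv proj
  rw [lintegral_map hh (by fun_prop), Measure.map_prod_map _ _ (by fun_prop) (by fun_prop),
    lintegral_map (by fun_prop) (by fun_prop), lintegral_prod _ (by fun_prop)]
  calc ∫⁻ y, ∫⁻ z, h ((y, f y) + (z, g z))
      = ∫⁻ y, ∫⁻ ξ, h (ξ, f y + g (ξ - y)) := by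
        refine lintegral_congr fun y => ?_
        rw [← lintegral_sub_right_eq_self _ y]
        simp
    _ = ∫⁻ ξ, ∫⁻ y, h (ξ, f y + g (ξ - y)) :=
        lintegral_lintegral_swap (Measurable.aemeasurable (by
          unfold Function.uncurry; fun_prop))
    _ = ∫⁻ ξ, ∫⁻ η, h (ξ, f ((2 : ℝ)⁻¹ • ξ + η) + g ((2 : ℝ)⁻¹ • ξ - η)) := by
        refine lintegral_congr fun ξ => ?_
        rw [← lintegral_add_left_eq_self _ ((2 : ℝ)⁻¹ • ξ)]
        refine lintegral_congr fun η => ?_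
        congr 4
        module

/-- The density of the convolution of the projection measure on the graph of `f` with itself. -/
def selfConvDensity (f : R2 → ℝ) : R3 → ℝ :=
  {q : R3 | 2 * f ((2 : ℝ)⁻¹ • q.1) ≤ q.2}.indicator
    fun q => symmSumDensity f ((2 : ℝ)⁻¹ • q.1) q.2

lemma continuousOn_selfConvDensity (hf : ContDiff ℝ 2 f)
    (hpos : ∀ x v, v ≠ 0 → 0 < hessForm f x v) :
    ContinuousOn (selfConvDensity f) {q : R3 | 2 * f ((2 : ℝ)⁻¹ • q.1) ≤ q.2} :=
  ((continuous_symmSumDensity hf hpos).comp (f := fun q : R3 => ((2 : ℝ)⁻¹ • q.1, q.2))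
    (by fun_prop)).continuousOn.congr fun _ hq => Set.indicator_of_mem hq _

lemma measurable_selfConvDensity (hf : ContDiff ℝ 2 f)
    (hpos : ∀ x v, v ≠ 0 → 0 < hessForm f x v) : Measurable (selfConvDensity f) :=
  ((continuous_symmSumDensity hf hpos).comp (f := fun q : R3 => ((2 : ℝ)⁻¹ • q.1, q.2))
    (by fun_prop)).measurable.indicator
      (isClosed_le (by fun_prop) (by fun_prop)).measurableSet

lemma mconv_proj_self_eq_withDensity (hf : ContDiff ℝ 2 f)
    (hpos : ∀ x v, v ≠ 0 → 0 < hessForm f x v) :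
    mconv (proj f) (proj f) =
      volume.withDensity fun q => ENNReal.ofReal (selfConvDensity f q) := by
  have hfm : Measurable f := hf.continuous.measurable
  have hm := (measurable_selfConvDensity hf hpos).ennreal_ofReal
  refine Measure.ext_of_lintegral _ fun h hh => ?_
  rw [lintegral_mconv_proj hfm hfm hh, lintegral_withDensity_eq_lintegral_mul _ hm hh,
    Measure.volume_eq_prod, lintegral_prod _ (hm.mul hh).aemeasurable]
  refine lintegral_congr fun ξ => ?_
  rw [lintegral_comp_symmSum hf hpos _ (G := fun t => h (ξ, t)) (by fun_prop),
    setLIntegral_congr Ioi_ae_eq_Ici, ← lintegral_indicator measurableSet_Ici]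
  refine lintegral_congr fun t => ?_
  by_cases ht : 2 * f ((2 : ℝ)⁻¹ • ξ) ≤ t <;> simp [selfConvDensity, ht]

end Convolution

theorem statement11_general {f : R2 → ℝ} (hf : ContDiff ℝ 2 f) (hHess : ∀ x, (Hess f x).PosDef) :
    ∃ F : R3 → ℝ,
      (∀ᵐ x ∂(volume : Measure R3),
        (mconv (proj f) (proj f)).rnDeriv volume x = ENNReal.ofReal (F x)) ∧
      ContinuousOn F {q : R3 | 2 * f ((2 : ℝ)⁻¹ • q.1) ≤ q.2} ∧
      ∀ ξ : R2, F (ξ, 2 * f ((2 : ℝ)⁻¹ • ξ)) =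
        Real.pi / √(Hess f ((2 : ℝ)⁻¹ • ξ)).det := by
  have hpos (x : R2) := (posDef_Hess_iff hf x).1 (hHess x)
  refine ⟨selfConvDensity f, ?_, continuousOn_selfConvDensity hf hpos, fun ξ => ?_⟩
  · rw [mconv_proj_self_eq_withDensity hf hpos]
    exact Measure.rnDeriv_withDensity _ (measurable_selfConvDensity hf hpos).ennreal_ofReal
  · rw [selfConvDensity, Set.indicator_of_mem (by simp), symmSumDensity_two_mul hf hpos]

theorem statement11 (φ : R2 → ℝ) (hφ0 : ∀ y, 0 ≤ φ y)
    (hφconv : ConvexOn ℝ Set.univ φ) (hφC2 : ContDiff ℝ 2 φ)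
    (ψ : R2 → ℝ) (hψ : ψ = fun y => ‖y‖ ^ 2 + φ y) :
    ∃ F : R3 → ℝ,
      (∀ᵐ x ∂(volume : Measure R3),
        (mconv (proj ψ) (proj ψ)).rnDeriv volume x = ENNReal.ofReal (F x)) ∧
      ContinuousOn F {q : R3 | 2 * ψ ((2:ℝ)⁻¹ • q.1) ≤ q.2} ∧
      ∀ ξ : R2, F (ξ, 2 * ψ ((2:ℝ)⁻¹ • ξ)) =
        Real.pi / Real.sqrt ((Hess ψ ((2:ℝ)⁻¹ • ξ)).det) := by
  subst hψ
  exact statement11_general ((contDiff_norm_sq ℝ).add hφC2) (posDef_Hess_norm_sq_add hφconv hφC2)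
end
end
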